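/- arXiv:1808.07105 — 6 statements merged into one kernel-verified Lean document; each statement's English description precedes it below -/
import Mathlib

section
/- Let d ≥ 1 and let b : ℝ^d → ℝ^d satisfy Assumptions (A). For the full (untruncated) mirror coupling, i.e. the coupling construction with no truncation of jumps or distances, one has for every h ∈ (0, h₀¹) and all x, y ∈ ℝ^d: 𝔼 f₁(|X' − Y'|) ≤ (1 − c₁·h)·f₁(|x − y|), where f₁, c₁ and h₀¹ are the explicit function and constants defined from L, K, R. -/
open scoped Classical
open MeasureTheory ProbabilityTheory Real

noncomputable section

/-- Standard Gaussian measure `N(0, I)` on `EuclideanSpace ℝ (Fin d)`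
(the `d`-fold product of standard Gaussians `N(0,1)`). -/
def stdGaussian (d : ℕ) : Measure (EuclideanSpace ℝ (Fin d)) :=
  (Measure.pi fun _ : Fin d => gaussianReal 0 1).map
    (MeasurableEquiv.toLp 2 (Fin d → ℝ))

/-- The Gaussian density `φ_{z,hI}` on `ℝ^d`. -/
def gaussDensity (d : ℕ) (h : ℝ) (z u : EuclideanSpace ℝ (Fin d)) : ℝ :=
  (2 * π * h) ^ (-(d : ℝ) / 2) * Real.exp (-‖u - z‖ ^ 2 / (2 * h))

/-- Reflection `R_{x̂,ŷ} u = u - 2⟨e, u⟩e` with `e = (x̂ - ŷ)/‖x̂ - ŷ‖`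
(the identity if `x̂ = ŷ`). -/
def reflect (d : ℕ) (xh yh : EuclideanSpace ℝ (Fin d)) (u : EuclideanSpace ℝ (Fin d)) :
    EuclideanSpace ℝ (Fin d) :=
  if xh = yh then u else
    u - (2 * @inner ℝ _ _ ((‖xh - yh‖)⁻¹ • (xh - yh)) u) • ((‖xh - yh‖)⁻¹ • (xh - yh))

/-- Second component `Y'` of the full (untruncated) mirror coupling, as a function of the
drift-updated points `x̂, ŷ`, the Gaussian input `z` and the uniform input `t`.
The first component is `X' = x̂ + √h • z`. -/
def mirrorY (d : ℕ) (h : ℝ) (xh yh : EuclideanSpace ℝ (Fin d))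
    (z : EuclideanSpace ℝ (Fin d)) (t : ℝ) : EuclideanSpace ℝ (Fin d) :=
  if t ≤ min (gaussDensity d h yh (xh + Real.sqrt h • z))
            (gaussDensity d h xh (xh + Real.sqrt h • z))
          / gaussDensity d h xh (xh + Real.sqrt h • z)
    then xh + Real.sqrt h • z
    else yh + Real.sqrt h • reflect d xh yh z

/-- The standard normal density `φ_{0,1}` on `ℝ`. -/
def stdNormalDensity (u : ℝ) : ℝ := (Real.sqrt (2 * π))⁻¹ * Real.exp (-u ^ 2 / 2)

/-- The constant `c₀`. -/
def c₀ : ℝ :=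
  4 * min (∫ u in Set.Ioo (0:ℝ) (1/2), u ^ 2 * (1 - Real.exp (u - 1/2)) * stdNormalDensity u)
      ((1 - Real.exp (-1)) * ∫ u in Set.Ioo (0:ℝ) (1/2), u ^ 3 * stdNormalDensity u)

/-- `q = 7 L R / c₀`. -/
def qConst (L K R : ℝ) : ℝ := 7 * L * R / c₀

/-- The step-size threshold `h₀¹ = (1/L) min(1/6, K/L, L R²/3, c₀²/(970 L R²))`. -/
def h₀₁ (L K R : ℝ) : ℝ :=
  (1 / L) * min (1/6) (min (K / L) (min (L * R ^ 2 / 3) (c₀ ^ 2 / (970 * (L * R ^ 2)))))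

/-- `r₁¹ = (1 + h₀¹ L) R`. -/
def r₁₁ (L K R : ℝ) : ℝ := (1 + h₀₁ L K R * L) * R

/-- The concave distance function `f₁` built from parameters `q, r₁¹`:
`f₁(r) = (1/q)(1 - e^{-qr})` for `r ≤ r₁¹` and
`f₁(r) = (1/q)(1 - e^{-q r₁¹}) + e^{-q r₁¹}(r - r₁¹)` for `r > r₁¹`. -/
def f₁Dist (q r11 r : ℝ) : ℝ :=
  if r ≤ r11 then (1 / q) * (1 - Real.exp (-q * r))
  else (1 / q) * (1 - Real.exp (-q * r11)) + Real.exp (-q * r11) * (r - r11)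

/-- The contraction constant
`c₁ = min(K/2, (245/(24 c₀)) L² R²) exp(-(49/(6 c₀)) L R²)`. -/
def c₁Const (L K R : ℝ) : ℝ :=
  min (K / 2) (245 / (24 * c₀) * (L ^ 2 * R ^ 2))
    * Real.exp (-((49 / (6 * c₀)) * (L * R ^ 2)))

end

section ConcaveDist

/-- Slope of the concave distance function. -/
noncomputable def slopeF (q r1 r : ℝ) : ℝ := Real.exp (-q * min r r1)

/-- Odd extension of the concave distance function. -/
noncomputable def fOdd (q r1 r : ℝ) : ℝ := if 0 ≤ r then f₁Dist q r1 r else -f₁Dist q r1 (-r)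

lemma slopeF_nonneg (q r1 r : ℝ) : 0 ≤ slopeF q r1 r := (Real.exp_pos _).le

lemma slopeF_anti {q : ℝ} (hq : 0 < q) (r1 : ℝ) {a b : ℝ} (hab : a ≤ b) :
    slopeF q r1 b ≤ slopeF q r1 a := by
  unfold slopeF
  apply Real.exp_le_exp.2
  have : min a r1 ≤ min b r1 := min_le_min_right _ hab
  nlinarith

lemma exp_tangent {q : ℝ} (hq : 0 < q) (a b : ℝ) :
    (1 / q) * (1 - Real.exp (-q * b)) ≤
      (1 / q) * (1 - Real.exp (-q * a)) + Real.exp (-q * a) * (b - a) := by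
  have h1 : Real.exp (-q * b) = Real.exp (-q * a) * Real.exp (-q * (b - a)) := by
    rw [← Real.exp_add]; ring_nf
  have h2 := Real.add_one_le_exp (-q * (b - a))
  have h3 := Real.exp_pos (-q * a)
  have h4 : Real.exp (-q * a) * (-q * (b - a) + 1) ≤ Real.exp (-q * b) := by
    rw [h1]; exact mul_le_mul_of_nonneg_left h2 h3.le
  have : (1 / q) * (1 - Real.exp (-q * b)) ≤
      (1 / q) * (1 - Real.exp (-q * a) * (-q * (b - a) + 1)) := by
    apply mul_le_mul_of_nonneg_left _ (by positivity)
    linarith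
  refine this.trans (le_of_eq ?_)
  field_simp
  ring

lemma f_tangent {q : ℝ} (hq : 0 < q) (r1 a b : ℝ) :
    f₁Dist q r1 b ≤ f₁Dist q r1 a + slopeF q r1 a * (b - a) := by
  unfold f₁Dist slopeF
  split_ifs with hb ha ha
  · rw [min_eq_left ha]; exact exp_tangent hq a b
  · rw [min_eq_right (by linarith)]
    have := exp_tangent hq r1 b
    linarith
  · rw [min_eq_left ha]
    have h1 := exp_tangent hq a r1
    have h2 : Real.exp (-q * r1) ≤ Real.exp (-q * a) := by
      apply Real.exp_le_exp.2; nlinarith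
    have h3 : 0 ≤ b - r1 := by linarith
    nlinarith
  · rw [min_eq_right (by linarith)]
    linarith

lemma f_mono {q : ℝ} (hq : 0 < q) (r1 : ℝ) {a b : ℝ} (hab : a ≤ b) :
    f₁Dist q r1 a ≤ f₁Dist q r1 b := by
  have h1 := f_tangent hq r1 b a
  have h2 := slopeF_nonneg q r1 b
  nlinarith

lemma f_zero {q r1 : ℝ} (h1 : 0 ≤ r1) : f₁Dist q r1 0 = 0 := by
  simp [f₁Dist, h1]

lemma f_nonneg {q r1 : ℝ} (hq : 0 < q) (h1 : 0 ≤ r1) {r : ℝ} (hr : 0 ≤ r) : 0 ≤ f₁Dist q r1 r := by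
  rw [← f_zero (q := q) h1]; exact f_mono hq r1 hr

lemma f_le_self {q r1 : ℝ} (hq : 0 < q) (h1 : 0 ≤ r1) (r : ℝ) : f₁Dist q r1 r ≤ r := by
  have := f_tangent hq r1 0 r
  rw [f_zero h1] at this
  simpa [slopeF, h1] using this

lemma f_subadd {q r1 : ℝ} (hq : 0 < q) (h1 : 0 ≤ r1) {a b : ℝ} (ha : 0 ≤ a) (hb : 0 ≤ b) :
    f₁Dist q r1 (a + b) ≤ f₁Dist q r1 a + f₁Dist q r1 b := by
  wlog hab : a ≤ b generalizing a b
  · have := this hb ha (by linarith)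
    rw [add_comm a b]; linarith
  have h2 := f_tangent hq r1 b (a + b)
  have h3 := f_tangent hq r1 a 0
  rw [f_zero h1] at h3
  have h4 := slopeF_anti hq r1 hab
  nlinarith

lemma fOdd_of_nonneg {q r1 r : ℝ} (hr : 0 ≤ r) : fOdd q r1 r = f₁Dist q r1 r := by
  simp [fOdd, hr]

lemma fOdd_neg {q r1 : ℝ} (h1 : 0 ≤ r1) (r : ℝ) : fOdd q r1 (-r) = - fOdd q r1 r := by
  unfold fOdd
  rcases lt_trichotomy r 0 with h | h | h
  · rw [if_pos (by linarith), if_neg (by linarith)]; ring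
  · subst h; simp [f_zero h1]
  · rw [if_neg (by linarith), if_pos (by linarith)]; simp

lemma fOdd_mono {q r1 : ℝ} (hq : 0 < q) (h1 : 0 ≤ r1) {a b : ℝ} (hab : a ≤ b) :
    fOdd q r1 a ≤ fOdd q r1 b := by
  unfold fOdd
  split_ifs with ha hb hb
  · exact f_mono hq r1 hab
  · linarith
  · have := f_nonneg hq h1 (r := -a) (by linarith)
    have := f_nonneg hq h1 hb
    linarith
  · have := f_mono hq r1 (a := -b) (b := -a) (by linarith)
    linarith

lemma abs_fOdd_le {q r1 : ℝ} (hq : 0 < q) (h1 : 0 ≤ r1) (r : ℝ) : |fOdd q r1 r| ≤ |r| := by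
  unfold fOdd
  split_ifs with h
  · rw [abs_of_nonneg (f_nonneg hq h1 h), abs_of_nonneg h]; exact f_le_self hq h1 r
  · rw [abs_neg, abs_of_nonneg (f_nonneg hq h1 (by linarith)), abs_of_neg (by linarith)]
    exact f_le_self hq h1 _

lemma measurable_f (q r1 : ℝ) : Measurable (f₁Dist q r1) := by
  unfold f₁Dist
  apply Measurable.ite (measurableSet_Iic) <;> fun_prop

lemma measurable_fOdd (q r1 : ℝ) : Measurable (fOdd q r1) := by
  unfold fOdd
  have := measurable_f q r1
  apply Measurable.ite (measurableSet_Ici) <;> fun_prop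

lemma gain_nonneg {q r1 : ℝ} (hq : 0 < q) (h1 : 0 ≤ r1) {r t : ℝ} (hr : 0 ≤ r) (ht : 0 ≤ t) :
    fOdd q r1 (r + t) + fOdd q r1 (r - t) ≤ 2 * f₁Dist q r1 r := by
  rw [fOdd_of_nonneg (by linarith : 0 ≤ r + t)]
  rcases le_total t r with h | h
  · rw [fOdd_of_nonneg (by linarith)]
    have := f_tangent hq r1 r (r + t)
    have := f_tangent hq r1 r (r - t)
    linarith
  · rw [show r - t = -(t - r) by ring, fOdd_neg h1, fOdd_of_nonneg (by linarith)]
    have h2 := f_subadd hq h1 (a := t - r) (b := r) (by linarith) hr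
    have h3 := f_subadd hq h1 (a := t) (b := r) ht hr
    rw [sub_add_cancel] at h2
    rw [add_comm r t]
    linarith

lemma f_small {q r1 r : ℝ} (h : r ≤ r1) : f₁Dist q r1 r = (1 / q) * (1 - Real.exp (-q * r)) := by
  simp [f₁Dist, h]

lemma slope_small {q r1 r : ℝ} (h : r ≤ r1) : slopeF q r1 r = Real.exp (-q * r) := by
  simp [slopeF, h]

lemma gain_a {q r1 : ℝ} (hq : 0 < q) {r t : ℝ} (hr1 : r ≤ r1) (ht : 0 ≤ t)
    (htr : t ≤ r) :
    Real.exp (-q * r) * (q / 2) * t ^ 2 ≤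
      2 * f₁Dist q r1 r - (fOdd q r1 (r + t) + fOdd q r1 (r - t)) := by
  rw [fOdd_of_nonneg (by linarith : 0 ≤ r + t), fOdd_of_nonneg (by linarith : 0 ≤ r - t)]
  have h2 := f_tangent hq r1 r (r + t)
  rw [slope_small hr1] at h2
  have h3 : f₁Dist q r1 (r - t) ≤ f₁Dist q r1 r - Real.exp (-q * r) * (t + q / 2 * t ^ 2) := by
    rw [f_small hr1, f_small (by linarith : r - t ≤ r1)]
    have e1 : Real.exp (-q * (r - t)) = Real.exp (-q * r) * Real.exp (q * t) := by
      rw [← Real.exp_add]; ring_nf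
    have e2 := Real.quadratic_le_exp_of_nonneg (x := q * t) (by positivity)
    rw [e1]
    have e3 := mul_le_mul_of_nonneg_left e2 (Real.exp_pos (-q * r)).le
    have e4 := mul_le_mul_of_nonneg_left e3 (by positivity : 0 ≤ 1 / q)
    have e5 : 1 / q * (Real.exp (-q * r) * (1 + q * t + (q * t) ^ 2 / 2)) =
      1 / q * Real.exp (-q * r) + Real.exp (-q * r) * (t + q / 2 * t ^ 2) := by
      field_simp
      ring
    linarith
  linarith

lemma gain_b {q r1 : ℝ} (hq : 0 < q) (h1 : 0 ≤ r1) {r t : ℝ} (hr : 0 ≤ r) (ht1 : t ≤ r1)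
    (hrt : r ≤ t) :
    Real.exp (-q * t) * (q / 2) * (t * r) ≤
      2 * f₁Dist q r1 r - (fOdd q r1 (r + t) + fOdd q r1 (r - t)) := by
  rw [fOdd_of_nonneg (by linarith : 0 ≤ r + t), show r - t = -(t - r) by ring, fOdd_neg h1,
    fOdd_of_nonneg (by linarith)]
  have h2 := f_tangent hq r1 t (r + t)
  rw [slope_small ht1] at h2
  have h3 := f_small (q := q) ht1
  have h4 := f_small (q := q) (by linarith : t - r ≤ r1)
  have h5 := f_small (q := q) (by linarith : r ≤ r1)
  have e1 : Real.exp (-q * (t - r)) = Real.exp (-q * t) * Real.exp (q * r) := by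
    rw [← Real.exp_add]; ring_nf
  have e0 : Real.exp (-q * r) = Real.exp (-q * t) * Real.exp (q * (t - r)) := by
    rw [← Real.exp_add]; ring_nf
  have e00 : 1 = Real.exp (-q * r) * Real.exp (q * r) := by
    rw [← Real.exp_add]; simp
  have e2 := Real.quadratic_le_exp_of_nonneg (x := q * r) (by positivity)
  have e3 := Real.add_one_le_exp (q * (t - r))
  have hE := Real.exp_pos (-q * t)
  set E := Real.exp (-q * t)
  set A := Real.exp (q * r)
  set B := Real.exp (-q * r)
  have hB : 0 < B := Real.exp_pos _
  have hx : 0 ≤ q * r := by positivity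
  have hy : 0 ≤ q * (t - r) := mul_nonneg hq.le (by linarith)
  have hBE : E * (q * (t - r) + 1) ≤ B := by
    rw [e0]; exact mul_le_mul_of_nonneg_left e3 hE.le
  have hBE' : E ≤ B := by nlinarith
  have key : E * (q * t * (q * r)) / 2 ≤ 2 * (1 - B) - E * (q * r + A - 1) := by
    have k1 : B * (1 + q * r + (q * r) ^ 2 / 2) ≤ 1 := by
      have := mul_le_mul_of_nonneg_left e2 hB.le; linarith
    have k2 : 1 - B = B * (A - 1) := by rw [mul_sub, ← e00]; ring
    have k3 : q * t = q * r + q * (t - r) := by ring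
    rw [k3]
    generalize q * r = X at *
    generalize q * (t - r) = Y at *
    have hA : 0 ≤ A - 1 - X := by nlinarith
    have k4 : 0 ≤ (B - E * (Y + 1)) * (X + A - 1) := mul_nonneg (by linarith) (by nlinarith)
    have k5 : 0 ≤ E * Y * (X + A - 1 - 2 * X) := mul_nonneg (mul_nonneg hE.le hy) (by linarith)
    have k6 : 0 ≤ B * (A - 1 - X - X ^ 2 / 2) := mul_nonneg hB.le (by linarith)
    have k7 : 0 ≤ (B - E) * X ^ 2 := mul_nonneg (by linarith) (by positivity)
    have k8 : 0 ≤ E * Y * X := by positivity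
    rw [k2]
    nlinarith
  have key2 := mul_le_mul_of_nonneg_left key (by positivity : 0 ≤ 1 / q)
  have e5 : 1 / q * (E * (q * t * (q * r)) / 2) = E * (q / 2) * (t * r) := by
    field_simp
  have e6 : 1 / q * (2 * (1 - B) - E * (q * r + A - 1)) =
    2 * (1 / q * (1 - B)) - E * r - 1 / q * (E * A) + 1 / q * E := by
    field_simp; ring
  rw [h3] at h2
  rw [e1] at h4
  rw [h4, h5]
  linarith

end ConcaveDist

section GaussOne

local notation "φ" => stdNormalDensity

lemma phi_eq : φ = gaussianPDFReal 0 1 := by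
  ext u; simp [stdNormalDensity, gaussianPDFReal]

lemma phi_nonneg (u : ℝ) : 0 ≤ φ u := by unfold stdNormalDensity; positivity

lemma phi_pos (u : ℝ) : 0 < φ u := by unfold stdNormalDensity; positivity

lemma phi_neg (u : ℝ) : φ (-u) = φ u := by simp [stdNormalDensity]

lemma continuous_phi : Continuous φ := by unfold stdNormalDensity; fun_prop

lemma phi_le_one (u : ℝ) : φ u ≤ 1 := by
  unfold stdNormalDensity
  have h1 : (Real.sqrt (2 * π))⁻¹ ≤ 1 := by
    apply inv_le_one_of_one_le₀
    rw [Real.one_le_sqrt]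
    nlinarith [Real.pi_gt_three]
  have h2 : Real.exp (-u ^ 2 / 2) ≤ 1 := Real.exp_le_one_iff.2 (by nlinarith [sq_nonneg u])
  exact mul_le_one₀ h1 (Real.exp_pos _).le h2

lemma integrable_phi : Integrable φ := by rw [phi_eq]; exact integrable_gaussianPDFReal 0 1

lemma integral_phi : ∫ u, φ u = 1 := by
  rw [phi_eq]; exact integral_gaussianPDFReal_eq_one 0 one_ne_zero

lemma integrable_id_phi : Integrable (fun u => u * φ u) := by
  have := (integrable_mul_exp_neg_mul_sq (b := 1 / 2) (by norm_num)).const_mul (Real.sqrt (2 * π))⁻¹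
  refine this.congr (Filter.Eventually.of_forall fun u => ?_)
  simp only [stdNormalDensity]
  rw [show -(1 / 2) * u ^ 2 = -u ^ 2 / 2 by ring]
  ring

lemma integrable_growth {F : ℝ → ℝ} (hF : Measurable F) {A B : ℝ} 
    (hb : ∀ u, |F u| ≤ A + B * |u|) : Integrable (fun u => F u * φ u) := by
  have h1 : Integrable (fun u => A * φ u + B * (|u * φ u|)) :=
    (integrable_phi.const_mul A).add (integrable_id_phi.abs.const_mul B)
  refine h1.mono' (by have := continuous_phi.measurable; fun_prop) ?_
  refine Filter.Eventually.of_forall fun u => ?_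
  rw [Real.norm_eq_abs, abs_mul, abs_mul, abs_of_nonneg (phi_nonneg u)]
  have := mul_le_mul_of_nonneg_right (hb u) (phi_nonneg u)
  linarith

lemma integrable_fOdd {q r1 : ℝ} (hq : 0 < q) (h1 : 0 ≤ r1) (ρ s : ℝ) :
    Integrable (fun u => fOdd q r1 (ρ + 2 * s * u) * φ u) := by
  apply integrable_growth (A := |ρ|) (B := |2 * s|)
  · have := measurable_fOdd q r1
    fun_prop
  · intro u
    refine (abs_fOdd_le hq h1 _).trans ((abs_add_le _ _).trans ?_)
    rw [abs_mul (2 * s) u]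

lemma integral_fold {g : ℝ → ℝ} (hg : Integrable g) :
    ∫ u, g u = ∫ u in Set.Ioi (0:ℝ), (g u + g (-u)) := by
  have hg' : Integrable (fun u => g (-u)) := hg.comp_neg
  rw [integral_add hg.integrableOn hg'.integrableOn, integral_comp_neg_Ioi, neg_zero,
    ← intervalIntegral.integral_Iic_add_Ioi (b := 0) hg.integrableOn hg.integrableOn]
  ring

lemma fOdd_integral_mono {q r1 : ℝ} (hq : 0 < q) (h1 : 0 ≤ r1) (s : ℝ) {ρ ρ' : ℝ} (h : ρ ≤ ρ') :
    ∫ u, fOdd q r1 (ρ + 2 * s * u) * φ u ≤ ∫ u, fOdd q r1 (ρ' + 2 * s * u) * φ u := by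
  apply integral_mono (integrable_fOdd hq h1 _ _) (integrable_fOdd hq h1 _ _)
  intro u
  exact mul_le_mul_of_nonneg_right (fOdd_mono hq h1 (by linarith)) (phi_nonneg u)

lemma integrableOn_sq_phi : IntegrableOn (fun u => u ^ 2 * φ u) (Set.Ioo (0:ℝ) (1/2)) := by
  have : Continuous (fun u => u ^ 2 * φ u) := by have := continuous_phi; fun_prop
  exact (this.integrableOn_Icc (a := 0) (b := 1/2)).mono_set Set.Ioo_subset_Icc_self

lemma fOdd_integral_le {q r1 : ℝ} (hq : 0 < q) (h1 : 0 ≤ r1) {s ρ m : ℝ} (hs : 0 ≤ s) (hρ : 0 ≤ ρ)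
    (hm : ∀ u ∈ Set.Ioo (0:ℝ) (1/2), m * u ^ 2 ≤
      2 * f₁Dist q r1 ρ - (fOdd q r1 (ρ + 2 * s * u) + fOdd q r1 (ρ - 2 * s * u))) :
    ∫ u, fOdd q r1 (ρ + 2 * s * u) * φ u ≤
      f₁Dist q r1 ρ - m * ∫ u in Set.Ioo (0:ℝ) (1/2), u ^ 2 * φ u := by
  have hi := integrable_fOdd hq h1 ρ s
  have hg : Integrable (fun u => f₁Dist q r1 ρ * φ u - fOdd q r1 (ρ + 2 * s * u) * φ u) :=
    (integrable_phi.const_mul _).sub hi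
  have e1 : ∫ u, (f₁Dist q r1 ρ * φ u - fOdd q r1 (ρ + 2 * s * u) * φ u) =
      f₁Dist q r1 ρ - ∫ u, fOdd q r1 (ρ + 2 * s * u) * φ u := by
    rw [integral_sub (integrable_phi.const_mul _) hi, integral_const_mul, integral_phi, mul_one]
  have hg' := hg.add hg.comp_neg
  rw [integral_fold hg] at e1
  have key : ∫ u in Set.Ioo (0:ℝ) (1/2), m * (u ^ 2 * φ u) ≤
      ∫ u in Set.Ioi (0:ℝ), ((f₁Dist q r1 ρ * φ u - fOdd q r1 (ρ + 2 * s * u) * φ u) +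
        (f₁Dist q r1 ρ * φ (-u) - fOdd q r1 (ρ + 2 * s * (-u)) * φ (-u))) := by
    have pt : ∀ u, ((f₁Dist q r1 ρ * φ u - fOdd q r1 (ρ + 2 * s * u) * φ u) +
        (f₁Dist q r1 ρ * φ (-u) - fOdd q r1 (ρ + 2 * s * (-u)) * φ (-u))) =
        (2 * f₁Dist q r1 ρ - (fOdd q r1 (ρ + 2 * s * u) + fOdd q r1 (ρ - 2 * s * u))) * φ u := by
      intro u
      rw [phi_neg, show ρ + 2 * s * (-u) = ρ - 2 * s * u by ring]
      ring
    refine le_trans (b := ∫ u in Set.Ioo (0:ℝ) (1/2),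
      ((f₁Dist q r1 ρ * φ u - fOdd q r1 (ρ + 2 * s * u) * φ u) +
        (f₁Dist q r1 ρ * φ (-u) - fOdd q r1 (ρ + 2 * s * (-u)) * φ (-u)))) ?_ ?_
    · apply setIntegral_mono_on (integrableOn_sq_phi.const_mul m) hg'.integrableOn measurableSet_Ioo
      intro u hu
      simp only [Pi.add_apply, pt]
      rw [← mul_assoc]
      exact mul_le_mul_of_nonneg_right (hm u hu) (phi_nonneg u)
    · apply setIntegral_mono_set hg'.integrableOn
      · refine (ae_restrict_iff' measurableSet_Ioi).2 (Filter.Eventually.of_forall fun u hu => ?_)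
        have hu : 0 < u := hu
        simp only [Pi.zero_apply, Pi.add_apply, pt]
        apply mul_nonneg _ (phi_nonneg u)
        have := gain_nonneg hq h1 hρ (t := 2 * s * u) (by positivity)
        linarith
      · exact Filter.Eventually.of_forall fun u hu => hu.1
  rw [integral_const_mul] at key
  linarith

lemma c0_int1 : IntegrableOn (fun u => u ^ 2 * (1 - Real.exp (u - 1/2)) * φ u)
    (Set.Ioo (0:ℝ) (1/2)) := by
  have : Continuous (fun u => u ^ 2 * (1 - Real.exp (u - 1/2)) * φ u) := by
    have := continuous_phi; fun_prop
  exact (this.integrableOn_Icc (a := 0) (b := 1/2)).mono_set Set.Ioo_subset_Icc_self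

lemma c0_int2 : IntegrableOn (fun u => u ^ 3 * φ u) (Set.Ioo (0:ℝ) (1/2)) := by
  have : Continuous (fun u => u ^ 3 * φ u) := by
    have := continuous_phi; fun_prop
  exact (this.integrableOn_Icc (a := 0) (b := 1/2)).mono_set Set.Ioo_subset_Icc_self

lemma setIntegral_pos_aux {g : ℝ → ℝ} (hg : IntegrableOn g (Set.Ioo (0:ℝ) (1/2)))
    (hp : ∀ u ∈ Set.Ioo (0:ℝ) (1/2), 0 < g u) : 0 < ∫ u in Set.Ioo (0:ℝ) (1/2), g u := by
  rw [setIntegral_pos_iff_support_of_nonneg_ae _ hg]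
  · have : Function.support g ∩ Set.Ioo (0:ℝ) (1/2) = Set.Ioo (0:ℝ) (1/2) :=
      Set.inter_eq_right.2 fun u hu => (hp u hu).ne'
    rw [this, Real.volume_Ioo]; norm_num
  · exact (ae_restrict_iff' measurableSet_Ioo).2
      (Filter.Eventually.of_forall fun u hu => (hp u hu).le)

lemma c0_pos : 0 < c₀ := by
  unfold c₀
  apply mul_pos (by norm_num)
  apply lt_min
  · apply setIntegral_pos_aux c0_int1
    intro u hu
    have h1 : Real.exp (u - 1/2) < 1 := by
      refine lt_of_lt_of_eq ?_ Real.exp_zero; exact Real.exp_lt_exp.2 (by linarith [hu.2])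
    have := phi_pos u
    have := hu.1
    have : 0 < 1 - Real.exp (u - 1/2) := by linarith
    positivity
  · apply mul_pos
    · have h1 : Real.exp (-1) < 1 := by
        refine lt_of_lt_of_eq ?_ Real.exp_zero; exact Real.exp_lt_exp.2 (by norm_num)
      linarith
    · apply setIntegral_pos_aux c0_int2
      intro u hu
      have := phi_pos u
      have := hu.1
      positivity

lemma c0_le : c₀ ≤ 4 * ∫ u in Set.Ioo (0:ℝ) (1/2), u ^ 2 * φ u := by
  unfold c₀
  apply mul_le_mul_of_nonneg_left _ (by norm_num)
  refine (min_le_left _ _).trans ?_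
  apply setIntegral_mono_on c0_int1 integrableOn_sq_phi measurableSet_Ioo
  intro u _
  apply mul_le_mul_of_nonneg_right _ (phi_nonneg u)
  have := Real.exp_pos (u - 1/2)
  nlinarith [sq_nonneg u]

lemma c0_le_half : c₀ ≤ 1 / 2 := by
  refine c0_le.trans ?_
  have : ∫ u in Set.Ioo (0:ℝ) (1/2), u ^ 2 * φ u ≤ ∫ u in Set.Ioo (0:ℝ) (1/2), (1/4 : ℝ) := by
    apply setIntegral_mono_on integrableOn_sq_phi (by simp) measurableSet_Ioo
    intro u hu
    have h1 := phi_le_one u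
    have h2 := phi_nonneg u
    have h3 : u ^ 2 ≤ 1 / 4 := by nlinarith [hu.1, hu.2]
    nlinarith [sq_nonneg u]
  simp at this
  linarith

end GaussOne

section Params

lemma h0_bounds {L K R h : ℝ} (hL : 0 < L) (hR : 0 < R) (hh : h ≤ h₀₁ L K R) :
    h * L ≤ 1 / 6 ∧ h * L ^ 2 ≤ K ∧ h ≤ R ^ 2 / 3 ∧ h * (L * R) ^ 2 ≤ c₀ ^ 2 / 970 := by
  have hc := c0_pos
  unfold h₀₁ at hh
  have h1 : h * L ≤ min (1/6) (min (K / L) (min (L * R ^ 2 / 3) (c₀ ^ 2 / (970 * (L * R ^ 2))))) := by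
    rw [one_div, inv_mul_eq_div, le_div_iff₀ hL] at hh
    exact hh
  rw [le_min_iff, le_min_iff, le_min_iff] at h1
  obtain ⟨a1, a2, a3, a4⟩ := h1
  refine ⟨a1, ?_, ?_, ?_⟩
  · rw [le_div_iff₀ hL] at a2; nlinarith
  · by_contra hcon
    push Not at hcon
    nlinarith
  · rw [le_div_iff₀ (by positivity)] at a4
    rw [le_div_iff₀ (by norm_num)]
    nlinarith

lemma c1_bounds {L K R : ℝ} :
    c₁Const L K R ≤ K / 2 * Real.exp (-((49 / (6 * c₀)) * (L * R ^ 2))) ∧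
    c₁Const L K R ≤ 245 / (24 * c₀) * (L ^ 2 * R ^ 2) *
      Real.exp (-((49 / (6 * c₀)) * (L * R ^ 2))) := by
  unfold c₁Const
  exact ⟨mul_le_mul_of_nonneg_right (min_le_left _ _) (Real.exp_pos _).le,
    mul_le_mul_of_nonneg_right (min_le_right _ _) (Real.exp_pos _).le⟩

lemma q_pos {L K R : ℝ} (hL : 0 < L) (hR : 0 < R) : 0 < qConst L K R := by
  have := c0_pos
  unfold qConst; positivity

lemma W_le {L K R r : ℝ} (hL : 0 < L) (hR : 0 < R) (hr : r ≤ 7 / 6 * R) :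
    Real.exp (-((49 / (6 * c₀)) * (L * R ^ 2))) ≤ Real.exp (-qConst L K R * r) := by
  have hc := c0_pos
  apply Real.exp_le_exp.2
  have h1 : qConst L K R * r ≤ qConst L K R * (7 / 6 * R) :=
    mul_le_mul_of_nonneg_left hr (q_pos hL hR).le
  have h2 : qConst L K R * (7 / 6 * R) = (49 / (6 * c₀)) * (L * R ^ 2) := by
    unfold qConst; field_simp; norm_num
  linarith

lemma far_case {L K R h r ρ r1 : ℝ} (hL : 0 < L) (hR : 0 < R) (hh : 0 < h) (hK : 0 < K)
    (hr1 : 0 ≤ r1) (hr1' : r1 ≤ 7 / 6 * R) (hr : 0 ≤ r) (hρ0 : 0 ≤ ρ)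
    (hρ : ρ ≤ (1 - K * h / 2) * r) :
    ∫ u, fOdd (qConst L K R) r1 (ρ + 2 * Real.sqrt h * u) * stdNormalDensity u ≤
      (1 - c₁Const L K R * h) * f₁Dist (qConst L K R) r1 r := by
  have hq := q_pos (K := K) hL hR
  set q := qConst L K R
  have h1 := fOdd_integral_le hq hr1 (s := Real.sqrt h) (ρ := ρ) (m := 0) (Real.sqrt_nonneg h) hρ0 (by
    intro u hu
    have h0 := hu.1
    have := gain_nonneg hq hr1 hρ0 (t := 2 * Real.sqrt h * u) (by positivity)
    linarith)
  have h2 := f_tangent hq r1 r ρ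
  have h3 : Real.exp (-((49 / (6 * c₀)) * (L * R ^ 2))) ≤ slopeF q r1 r :=
    W_le hL hR ((min_le_right _ _).trans hr1')
  have h4 := f_le_self hq hr1 r
  have h5 := f_nonneg hq hr1 hr
  have h6 := (c1_bounds (L := L) (K := K) (R := R)).1
  have hW := Real.exp_pos (-((49 / (6 * c₀)) * (L * R ^ 2)))
  set W := Real.exp (-((49 / (6 * c₀)) * (L * R ^ 2)))
  have h7 : c₁Const L K R * h * f₁Dist q r1 r ≤ K / 2 * W * h * r := by
    calc c₁Const L K R * h * f₁Dist q r1 r ≤ K / 2 * W * h * f₁Dist q r1 r := by gcongr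
      _ ≤ _ := by gcongr
  have h8 : W * (K * h / 2 * r) ≤ slopeF q r1 r * (r - ρ) := by
    apply mul_le_mul h3 (by linarith) (by positivity) (slopeF_nonneg _ _ _)
  linarith

set_option maxHeartbeats 1600000 in
lemma near_case {L K R h r r1 : ℝ} (hL : 0 < L) (hR : 0 < R) (hh : 0 < h)
    (hr1 : (1 + h * L) * R ≤ r1) (b1 : h * L ≤ 1 / 6) (b3 : h ≤ R ^ 2 / 3)
    (b4 : h * (L * R) ^ 2 ≤ c₀ ^ 2 / 970) (hr : 0 ≤ r) (hrR : r ≤ R) :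
    ∫ u, fOdd (qConst L K R) r1 ((1 + h * L) * r + 2 * Real.sqrt h * u) * stdNormalDensity u ≤
      (1 - c₁Const L K R * h) * f₁Dist (qConst L K R) r1 r := by
  have hq := q_pos (K := K) hL hR
  have hc := c0_pos
  have hc2 := c0_le_half
  have hI := c0_le
  have hqc : qConst L K R * c₀ = 7 * (L * R) := by unfold qConst; field_simp
  have hW := W_le (K := K) hL hR (by linarith : r ≤ 7 / 6 * R)
  have h6 := (c1_bounds (L := L) (K := K) (R := R)).2
  set q := qConst L K R
  set W := Real.exp (-((49 / (6 * c₀)) * (L * R ^ 2)))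
  have hW0 : 0 < W := Real.exp_pos _
  set I := ∫ u in Set.Ioo (0:ℝ) (1/2), u ^ 2 * stdNormalDensity u
  have hs : 0 < Real.sqrt h := Real.sqrt_pos.2 hh
  have hss : Real.sqrt h ^ 2 = h := Real.sq_sqrt hh.le
  set s := Real.sqrt h
  set ρ := (1 + h * L) * r with hρdef
  have hhL : 0 < h * L := by positivity
  have hRr1 : R ≤ r1 := by nlinarith
  have hr10 : 0 ≤ r1 := by linarith
  have hrρ : r ≤ ρ := by nlinarith
  have hρ0 : 0 ≤ ρ := by linarith
  have hρr1 : ρ ≤ r1 := le_trans (mul_le_mul_of_nonneg_left hrR (by linarith)) hr1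
  have hsR : s ≤ R := by
    apply (pow_le_pow_iff_left₀ hs.le hR.le two_ne_zero).1
    nlinarith [sq_nonneg R]
  have hf0 := f_nonneg hq hr10 hr
  have ft := f_tangent hq r1 r ρ
  rw [slope_small (by linarith : r ≤ r1)] at ft
  have hρr : ρ - r = h * L * r := by rw [hρdef]; ring
  rw [hρr] at ft
  set E := Real.exp (-q * r) with hE
  have hE0 : 0 < E := Real.exp_pos _
  have hE1 : E ≤ 1 := by apply Real.exp_le_one_iff.2; nlinarith
  rcases le_total s ρ with hcase | hcase
  · -- large distance
    have key := fOdd_integral_le hq hr10 (s := s) (ρ := ρ)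
      (m := Real.exp (-q * ρ) * (q / 2) * (4 * s ^ 2)) hs.le hρ0 (by
        intro u hu
        have hu0 := hu.1
        have hu1 := hu.2
        have := gain_a hq hρr1 (t := 2 * s * u) (by positivity) (by nlinarith)
        nlinarith [this])
    have e1 : E * (9 / 10) ≤ Real.exp (-q * ρ) := by
      have : Real.exp (-q * ρ) = E * Real.exp (-(q * (h * L * r))) := by
        rw [hE, ← Real.exp_add, ← hρr]; ring_nf
      rw [this]
      apply mul_le_mul_of_nonneg_left _ hE0.le
      have t1 := Real.add_one_le_exp (-(q * (h * L * r)))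
      have t2 : q * (h * L * r) ≤ 1 / 10 := by
        have : q * (h * L * r) ≤ q * (h * L * R) := by gcongr
        have t3 : c₀ * (q * (h * L * R)) = 7 * (h * (L * R) ^ 2) := by
          linear_combination (h * L * R) * hqc
        have t4 : c₀ * (q * (h * L * R)) ≤ c₀ * (1 / 10) := by rw [t3]; nlinarith
        have := le_of_mul_le_mul_left t4 hc
        linarith
      linarith
    have g1 : E * (9 / 10) * (7 / 2 * (L * R) * h) ≤
        Real.exp (-q * ρ) * (q / 2) * (4 * s ^ 2) * I := by
      have a1 : 7 / 2 * (L * R) * h ≤ q / 2 * (4 * h) * I := by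
        have := mul_le_mul_of_nonneg_left hI (by positivity : 0 ≤ q * h / 2)
        have a2 : q * h / 2 * c₀ = 7 / 2 * (L * R) * h := by linear_combination h / 2 * hqc
        linarith
      have := mul_le_mul e1 a1 (by positivity) (Real.exp_pos _).le
      rw [hss]
      linarith
    have g2 : c₁Const L K R * h * f₁Dist q r1 r ≤ E * (35 / 24 * (L * R) * h) := by
      have a1 : f₁Dist q r1 r ≤ 1 / q := by
        rw [f_small (by linarith : r ≤ r1)]
        have : 0 < 1 / q := by positivity
        nlinarith
      calc c₁Const L K R * h * f₁Dist q r1 r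
          ≤ 245 / (24 * c₀) * (L ^ 2 * R ^ 2) * E * h * (1 / q) := by gcongr; exact h6.trans (by gcongr)
        _ = E * (35 / 24 * (L * R) * h) := by
          have : q = 7 * (L * R) / c₀ := by rw [← hqc]; field_simp
          rw [this]; field_simp; norm_num
    have g3 : E * (h * L * r) ≤ E * ((L * R) * h) := by
      apply mul_le_mul_of_nonneg_left _ hE0.le
      have : h * L * r ≤ h * L * R := by gcongr
      linarith
    have g4 : 0 < E * ((L * R) * h) := by positivity
    linarith
  · -- small distance
    have key := fOdd_integral_le hq hr10 (s := s) (ρ := ρ)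
      (m := Real.exp (-q * s) * (q / 2) * (4 * s * ρ)) hs.le hρ0 (by
        intro u hu
        have hu0 := hu.1
        have hu1 := hu.2
        have hts : 2 * s * u ≤ s := by nlinarith
        rcases le_total (2 * s * u) ρ with ht | ht
        · refine le_trans ?_ (gain_a hq hρr1 (t := 2 * s * u) (by positivity) ht)
          have a1 : Real.exp (-q * s) ≤ Real.exp (-q * ρ) := Real.exp_le_exp.2 (by nlinarith)
          have a2 : 4 * s * ρ * u ^ 2 ≤ (2 * s * u) ^ 2 := by
            have : 0 ≤ 4 * s * u ^ 2 * (s - ρ) := mul_nonneg (by positivity) (by linarith)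
            linarith
          calc _ = Real.exp (-q * s) * (q / 2) * (4 * s * ρ * u ^ 2) := by ring
            _ ≤ _ := by gcongr
        · refine le_trans ?_ (gain_b hq hr10 (t := 2 * s * u) hρ0 (by linarith) ht)
          have a1 : Real.exp (-q * s) ≤ Real.exp (-q * (2 * s * u)) :=
            Real.exp_le_exp.2 (by nlinarith)
          have a2 : 4 * s * ρ * u ^ 2 ≤ 2 * s * u * ρ := by
            have : 0 ≤ 2 * s * u * ρ * (1 - 2 * u) := mul_nonneg (by positivity) (by linarith)
            linarith
          calc _ = Real.exp (-q * s) * (q / 2) * (4 * s * ρ * u ^ 2) := by ring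
            _ ≤ _ := by gcongr)
    have hLRs : L * R * s ≤ c₀ / 31 := by
      apply (pow_le_pow_iff_left₀ (by positivity) (by positivity) two_ne_zero).1
      rw [mul_pow, hss]
      nlinarith
    have hqs : q * s ≤ 7 / 31 := by
      have : c₀ * (q * s) ≤ c₀ * (7 / 31) := by
        have : c₀ * (q * s) = 7 * (L * R * s) := by linear_combination s * hqc
        rw [this]; linarith
      exact le_of_mul_le_mul_left this hc
    have e1 : 24 / 31 ≤ Real.exp (-q * s) := by
      have := Real.add_one_le_exp (-q * s)
      linarith
    have g1 : 24 / 31 * (7 / 2 * (L * R) * s * r) ≤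
        Real.exp (-q * s) * (q / 2) * (4 * s * ρ) * I := by
      have a1 : 7 / 2 * (L * R) * s * r ≤ q / 2 * (4 * s * ρ) * I := by
        have := mul_le_mul_of_nonneg_left hI (by positivity : 0 ≤ q * s * ρ / 2)
        have a2 : q * s * ρ / 2 * c₀ = 7 / 2 * (L * R) * s * ρ := by
          linear_combination s * ρ / 2 * hqc
        have a3 : 7 / 2 * (L * R) * s * r ≤ 7 / 2 * (L * R) * s * ρ := by gcongr
        linarith
      have := mul_le_mul e1 a1 (by positivity) (Real.exp_pos _).le
      linarith
    have g2 : c₁Const L K R * h * f₁Dist q r1 r ≤ 1 / 2 * (L * R * s * r) := by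
      have hfr := f_le_self hq hr10 r
      calc c₁Const L K R * h * f₁Dist q r1 r
          ≤ 245 / (24 * c₀) * (L ^ 2 * R ^ 2) * 1 * h * r := by
            gcongr; exact h6.trans (by gcongr; linarith)
        _ = 245 / (24 * c₀) * (L * R * s) * (L * R * s * r) := by rw [← hss]; ring
        _ ≤ 245 / (24 * c₀) * (c₀ / 31) * (L * R * s * r) := by gcongr
        _ = 245 / (24 * 31) * (L * R * s * r) := by field_simp
        _ ≤ _ := by
          apply mul_le_mul_of_nonneg_right (by norm_num) (by positivity)
    have g3 : E * (h * L * r) ≤ L * R * s * r := by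
      calc E * (h * L * r) ≤ 1 * (h * L * r) := by gcongr
        _ = L * s * s * r := by rw [← hss]; ring
        _ ≤ L * R * s * r := by gcongr
    have g4 : 0 ≤ L * R * s * r := by positivity
    linarith

end Params

section Coupling

lemma fold_reflection {q r1 : ℝ} (hq : 0 < q) (h1 : 0 ≤ r1) {h ρ : ℝ} (hh : 0 < h) (hρ : 0 < ρ) :
    ∫ u, stdNormalDensity u * ((1 - min (Real.exp (-(ρ ^ 2 + 2 * ρ * (Real.sqrt h * u)) / (2 * h))) 1) *
      f₁Dist q r1 |ρ + 2 * Real.sqrt h * u|) =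
    ∫ u, fOdd q r1 (ρ + 2 * Real.sqrt h * u) * stdNormalDensity u := by
  have hs : 0 < Real.sqrt h := Real.sqrt_pos.2 hh
  have hss : Real.sqrt h ^ 2 = h := Real.sq_sqrt hh.le
  set s := Real.sqrt h
  set a := ρ / s with ha
  have hFint := integrable_fOdd hq h1 ρ s
  have mw : Measurable (fun u : ℝ => ρ + 2 * s * u) := by fun_prop
  have mset : MeasurableSet {u : ℝ | 0 < ρ + 2 * s * u} := measurableSet_lt measurable_const mw
  have mset' : MeasurableSet {u : ℝ | ρ + 2 * s * u < 0} := measurableSet_lt mw measurable_const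
  have hA := hFint.indicator mset
  have hB' := hFint.neg.indicator mset'
  set A : ℝ → ℝ := Set.indicator {u : ℝ | 0 < ρ + 2 * s * u}
    (fun u => fOdd q r1 (ρ + 2 * s * u) * stdNormalDensity u) with hAdef
  set B' : ℝ → ℝ := Set.indicator {u : ℝ | ρ + 2 * s * u < 0}
    (-fun u => fOdd q r1 (ρ + 2 * s * u) * stdNormalDensity u) with hBdef
  have hB : Integrable (fun u => B' (-a - u)) := hB'.comp_sub_left (-a)
  have eB : ∫ u, B' (-a - u) = ∫ u, B' u := integral_sub_left_eq_self B' volume (-a)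
  have hw : ∀ u, ρ + 2 * s * (-a - u) = -(ρ + 2 * s * u) := by
    intro u; rw [ha]; field_simp; ring
  have pt : ∀ u, stdNormalDensity u *
      ((1 - min (Real.exp (-(ρ ^ 2 + 2 * ρ * (s * u)) / (2 * h))) 1) *
      f₁Dist q r1 |ρ + 2 * s * u|) = A u - B' (-a - u) := by
    intro u
    have hexp : -(ρ ^ 2 + 2 * ρ * (s * u)) / (2 * h) = -(ρ * (ρ + 2 * s * u)) / (2 * h) := by
      ring
    rcases le_or_gt (ρ + 2 * s * u) 0 with hneg | hpos
    · have e1 : min (Real.exp (-(ρ ^ 2 + 2 * ρ * (s * u)) / (2 * h))) 1 = 1 := by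
        apply min_eq_right
        apply Real.one_le_exp
        rw [hexp]
        apply div_nonneg _ (by positivity)
        nlinarith
      have e2 : A u = 0 := Set.indicator_of_notMem (by simpa using hneg) _
      have e3 : B' (-a - u) = 0 := by
        apply Set.indicator_of_notMem
        simp only [Set.mem_setOf_eq, hw]
        linarith
      rw [e1, e2, e3]; ring
    · have e1 : min (Real.exp (-(ρ ^ 2 + 2 * ρ * (s * u)) / (2 * h))) 1 =
          Real.exp (-(ρ ^ 2 + 2 * ρ * (s * u)) / (2 * h)) := by
        apply min_eq_left
        apply Real.exp_le_one_iff.2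
        rw [hexp]
        apply div_nonpos_of_nonpos_of_nonneg _ (by positivity)
        nlinarith
      have e2 : A u = f₁Dist q r1 (ρ + 2 * s * u) * stdNormalDensity u := by
        rw [hAdef, Set.indicator_of_mem (by simpa using hpos), fOdd_of_nonneg hpos.le]
      have e4 : stdNormalDensity (-a - u) = stdNormalDensity u *
          Real.exp (-(ρ ^ 2 + 2 * ρ * (s * u)) / (2 * h)) := by
        unfold stdNormalDensity
        rw [mul_assoc, ← Real.exp_add]
        congr 2
        rw [ha, ← hss]
        field_simp
        ring
      have e3 : B' (-a - u) = f₁Dist q r1 (ρ + 2 * s * u) * stdNormalDensity (-a - u) := by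
        rw [hBdef, Set.indicator_of_mem (by simp only [Set.mem_setOf_eq, hw]; linarith)]
        simp only [Pi.neg_apply, hw]
        rw [fOdd_neg h1, fOdd_of_nonneg hpos.le]
        ring
      rw [e1, e2, e3, e4, abs_of_pos hpos]; ring
  rw [integral_congr_ae (Filter.Eventually.of_forall pt), integral_sub hA hB, eB,
    ← integral_sub hA hB']
  refine integral_congr_ae (Filter.Eventually.of_forall fun u => ?_)
  simp only [hAdef, hBdef]
  rcases lt_trichotomy (ρ + 2 * s * u) 0 with hneg | hz | hpos
  · rw [Set.indicator_of_notMem (by simpa using hneg.le), Set.indicator_of_mem (by simpa using hneg)]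
    simp
  · rw [Set.indicator_of_notMem (by simpa using hz.le), Set.indicator_of_notMem (by simpa using hz.ge), hz,
      fOdd_of_nonneg le_rfl, f_zero h1]
    simp
  · rw [Set.indicator_of_mem (by simpa using hpos), Set.indicator_of_notMem (by simpa using hpos.le)]
    simp

lemma inner_law {d : ℕ} (e : EuclideanSpace ℝ (Fin d)) (he : ‖e‖ = 1) :
    (_root_.stdGaussian d).map (fun z => @inner ℝ _ _ e z) = gaussianReal 0 1 := by
  have h1 : _root_.stdGaussian d = ProbabilityTheory.stdGaussian (EuclideanSpace ℝ (Fin d)) := by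
    rw [← map_pi_eq_stdGaussian]; rfl
  rw [h1]
  have := IsGaussian.map_eq_gaussianReal
    (μ := ProbabilityTheory.stdGaussian (EuclideanSpace ℝ (Fin d))) (innerSL ℝ e)
  rw [integral_strongDual_stdGaussian, variance_dual_stdGaussian, innerSL_apply_norm, he] at this
  simpa using this

lemma mirror_dist {d : ℕ} {h : ℝ} (hh : 0 < h) {xh yh : EuclideanSpace ℝ (Fin d)} (hne : xh ≠ yh)
    (z : EuclideanSpace ℝ (Fin d)) (t : ℝ) :
    ‖(xh + Real.sqrt h • z) - mirrorY d h xh yh z t‖ =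
      if t ≤ min (Real.exp (-(‖xh - yh‖ ^ 2 + 2 * ‖xh - yh‖ *
        (Real.sqrt h * @inner ℝ _ _ ((‖xh - yh‖)⁻¹ • (xh - yh)) z)) / (2 * h))) 1 then 0
      else |‖xh - yh‖ + 2 * Real.sqrt h * @inner ℝ _ _ ((‖xh - yh‖)⁻¹ • (xh - yh)) z| := by
  have hρ : 0 < ‖xh - yh‖ := norm_pos_iff.2 (sub_ne_zero.2 hne)
  have he : ‖(‖xh - yh‖)⁻¹ • (xh - yh)‖ = 1 := norm_smul_inv_norm (𝕜 := ℝ) (sub_ne_zero.2 hne)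
  have hxy : xh - yh = ‖xh - yh‖ • ((‖xh - yh‖)⁻¹ • (xh - yh)) := by
    rw [smul_smul, mul_inv_cancel₀ hρ.ne', one_smul]
  have hrat : min (gaussDensity d h yh (xh + Real.sqrt h • z))
            (gaussDensity d h xh (xh + Real.sqrt h • z))
          / gaussDensity d h xh (xh + Real.sqrt h • z) =
      min (Real.exp (-(‖xh - yh‖ ^ 2 + 2 * ‖xh - yh‖ *
        (Real.sqrt h * @inner ℝ _ _ ((‖xh - yh‖)⁻¹ • (xh - yh)) z)) / (2 * h))) 1 := by
    have hpos : 0 < gaussDensity d h xh (xh + Real.sqrt h • z) := by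
      unfold gaussDensity; positivity
    rw [← min_div_div_right hpos.le, div_self hpos.ne']
    congr 1
    unfold gaussDensity
    rw [mul_div_mul_left _ _ (by positivity), ← Real.exp_sub]
    congr 1
    have e1 : xh + Real.sqrt h • z - yh = (xh - yh) + Real.sqrt h • z := by abel
    rw [e1, add_sub_cancel_left, norm_add_sq_real, real_inner_smul_right, real_inner_smul_left]
    field_simp
    ring
  unfold mirrorY
  rw [hrat]
  split_ifs with hc
  · simp
  · unfold reflect
    rw [if_neg hne]
    set e := (‖xh - yh‖)⁻¹ • (xh - yh) with hedef
    have e1 : xh + Real.sqrt h • z - (yh + Real.sqrt h • (z - (2 * @inner ℝ _ _ e z) • e)) =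
        (‖xh - yh‖ + 2 * Real.sqrt h * @inner ℝ _ _ e z) • e := by
      rw [add_smul, ← hxy, smul_sub, smul_smul]
      rw [show Real.sqrt h * (2 * @inner ℝ _ _ e z) = 2 * Real.sqrt h * @inner ℝ _ _ e z by ring]
      abel
    rw [e1, norm_smul, he, mul_one, Real.norm_eq_abs]

lemma inner_unif {p c : ℝ} (hp0 : 0 ≤ p) (hp1 : p ≤ 1) :
    ∫ t in Set.Icc (0:ℝ) 1, (if t ≤ p then 0 else c) = (1 - p) * c := by
  have : (fun t : ℝ => if t ≤ p then 0 else c) = Set.indicator (Set.Ioi p) (fun _ => c) := by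
    ext t
    by_cases ht : t ≤ p
    · rw [if_pos ht, Set.indicator_of_notMem (by simpa using ht)]
    · rw [if_neg ht, Set.indicator_of_mem (by simpa using ht)]
  rw [this, integral_indicator measurableSet_Ioi, Measure.restrict_restrict measurableSet_Ioi]
  have h2 : Set.Ioi p ∩ Set.Icc (0:ℝ) 1 = Set.Ioc p 1 := by
    ext t; simp only [Set.mem_inter_iff, Set.mem_Ioi, Set.mem_Icc, Set.mem_Ioc]
    constructor
    · rintro ⟨a, b, c⟩; exact ⟨a, c⟩
    · rintro ⟨a, b⟩; exact ⟨a, by linarith, b⟩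
  rw [h2]
  simp [Measure.real, Real.volume_Ioc, hp1]

lemma coupling_integral {d : ℕ} {Ω : Type*} [MeasureSpace Ω] [IsProbabilityMeasure (ℙ : Measure Ω)]
    (Z : Ω → EuclideanSpace ℝ (Fin d)) (ζ : Ω → ℝ)
    (hZmeas : Measurable Z) (hζmeas : Measurable ζ)
    (hZlaw : Measure.map Z ℙ = _root_.stdGaussian d)
    (hζlaw : Measure.map ζ ℙ = volume.restrict (Set.Icc (0:ℝ) 1))
    (hindep : IndepFun Z ζ ℙ) {q r1 h : ℝ} (hq : 0 < q) (h1 : 0 ≤ r1) (hh : 0 < h)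
    {xh yh : EuclideanSpace ℝ (Fin d)} (hne : xh ≠ yh) :
    ∫ ω, f₁Dist q r1 ‖(xh + Real.sqrt h • Z ω) - mirrorY d h xh yh (Z ω) (ζ ω)‖ ∂ℙ =
      ∫ u, fOdd q r1 (‖xh - yh‖ + 2 * Real.sqrt h * u) * stdNormalDensity u := by
  have hρ : 0 < ‖xh - yh‖ := norm_pos_iff.2 (sub_ne_zero.2 hne)
  have he : ‖(‖xh - yh‖)⁻¹ • (xh - yh)‖ = 1 := norm_smul_inv_norm (𝕜 := ℝ) (sub_ne_zero.2 hne)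
  simp_rw [mirror_dist hh hne]
  set e := (‖xh - yh‖)⁻¹ • (xh - yh) with hedef
  set ρ := ‖xh - yh‖
  set s := Real.sqrt h with hsdef
  have hin : Measurable (fun z : EuclideanSpace ℝ (Fin d) => @inner ℝ _ _ e z) := by fun_prop
  set U : Ω → ℝ := fun ω => @inner ℝ _ _ e (Z ω) with hU
  have hUm : Measurable U := hin.comp hZmeas
  have hUlaw : Measure.map U ℙ = gaussianReal 0 1 := by
    rw [← inner_law e he, ← hZlaw, Measure.map_map hin hZmeas]; rfl
  have hUind : IndepFun U ζ ℙ := hindep.comp hin measurable_id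
  have hjoint : Measure.map (fun ω => (U ω, ζ ω)) ℙ =
      (gaussianReal 0 1).prod (volume.restrict (Set.Icc (0:ℝ) 1)) := by
    rw [(indepFun_iff_map_prod_eq_prod_map_map hUm.aemeasurable hζmeas.aemeasurable).1 hUind,
      hUlaw, hζlaw]
  set P : ℝ → ℝ := fun u => min (Real.exp (-(ρ ^ 2 + 2 * ρ * (s * u)) / (2 * h))) 1 with hP
  have hPm : Measurable P := by fun_prop
  set H : ℝ × ℝ → ℝ := fun v => f₁Dist q r1 (if v.2 ≤ P v.1 then 0 else |ρ + 2 * s * v.1|) with hH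
  have hHm : Measurable H := by
    apply (measurable_f q r1).comp
    apply Measurable.ite (measurableSet_le measurable_snd (hPm.comp measurable_fst))
    · fun_prop
    · have : Measurable (fun v : ℝ × ℝ => ρ + 2 * s * v.1) := by fun_prop
      exact this.abs
  have step1 : ∫ ω, f₁Dist q r1 (if ζ ω ≤ P (U ω) then 0 else |ρ + 2 * s * U ω|) ∂ℙ =
      ∫ v, H v ∂((gaussianReal 0 1).prod (volume.restrict (Set.Icc (0:ℝ) 1))) := by
    rw [← hjoint, integral_map (hUm.prodMk hζmeas).aemeasurable hHm.aestronglyMeasurable]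
  have : IsProbabilityMeasure (volume.restrict (Set.Icc (0:ℝ) 1)) := by
    constructor; simp
  have hbd : Integrable (fun u : ℝ => |ρ| + |2 * s| * |u|) (gaussianReal 0 1) := by
    have : Integrable (fun u : ℝ => u) (gaussianReal 0 1) :=
      (memLp_id_gaussianReal (μ := 0) (v := 1) 1).integrable le_rfl
    exact (integrable_const _).add (this.abs.const_mul _)
  have hHint : Integrable H ((gaussianReal 0 1).prod (volume.restrict (Set.Icc (0:ℝ) 1))) := by
    refine (hbd.comp_fst (ν := volume.restrict (Set.Icc (0:ℝ) 1))).mono' hHm.aestronglyMeasurable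
      (Filter.Eventually.of_forall fun v => ?_)
    have a1 : ∀ r : ℝ, 0 ≤ r → r ≤ |ρ| + |2 * s| * |v.1| →
        ‖f₁Dist q r1 r‖ ≤ |ρ| + |2 * s| * |v.1| := by
      intro r hr hr'
      rw [Real.norm_eq_abs, abs_of_nonneg (f_nonneg hq h1 hr)]
      exact (f_le_self hq h1 r).trans hr'
    simp only [hH]
    split_ifs
    · exact a1 _ le_rfl (by positivity)
    · apply a1 _ (abs_nonneg _)
      rw [← abs_mul]
      exact abs_add_le _ _
  rw [show (∫ ω, f₁Dist q r1 (if ζ ω ≤ min (Real.exp (-(ρ ^ 2 + 2 * ρ * (s * @inner ℝ _ _ e (Z ω))) / (2 * h))) 1 then 0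
      else |ρ + 2 * s * @inner ℝ _ _ e (Z ω)|) ∂ℙ) = 
      ∫ ω, f₁Dist q r1 (if ζ ω ≤ P (U ω) then 0 else |ρ + 2 * s * U ω|) ∂ℙ from rfl,
    step1, integral_prod _ hHint, ← fold_reflection hq h1 hh hρ,
    integral_gaussianReal_eq_integral_smul (one_ne_zero)]
  refine integral_congr_ae (Filter.Eventually.of_forall fun u => ?_)
  simp only [smul_eq_mul, ← phi_eq]
  congr 1
  have : ∀ t, H (u, t) = if t ≤ P u then 0 else f₁Dist q r1 |ρ + 2 * s * u| := by
    intro t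
    simp only [hH]
    split_ifs
    · exact f_zero h1
    · rfl
  simp_rw [this]
  exact inner_unif (le_min (Real.exp_pos _).le zero_le_one) (min_le_right _ _)

lemma coupling_integral_le {d : ℕ} {Ω : Type*} [MeasureSpace Ω] [IsProbabilityMeasure (ℙ : Measure Ω)]
    (Z : Ω → EuclideanSpace ℝ (Fin d)) (ζ : Ω → ℝ)
    (hZmeas : Measurable Z) (hζmeas : Measurable ζ)
    (hZlaw : Measure.map Z ℙ = _root_.stdGaussian d)
    (hζlaw : Measure.map ζ ℙ = volume.restrict (Set.Icc (0:ℝ) 1))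
    (hindep : IndepFun Z ζ ℙ) {q r1 h : ℝ} (hq : 0 < q) (h1 : 0 ≤ r1) (hh : 0 < h)
    (xh yh : EuclideanSpace ℝ (Fin d)) :
    ∫ ω, f₁Dist q r1 ‖(xh + Real.sqrt h • Z ω) - mirrorY d h xh yh (Z ω) (ζ ω)‖ ∂ℙ =
      ∫ u, fOdd q r1 (‖xh - yh‖ + 2 * Real.sqrt h * u) * stdNormalDensity u := by
  by_cases hne : xh = yh
  · subst hne
    have e1 : ∀ z t, mirrorY d h xh xh z t = xh + Real.sqrt h • z := by
      intro z t; simp [mirrorY, reflect]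
    simp only [e1, sub_self, norm_zero, f_zero h1, integral_zero, zero_add]
    have hi := integrable_fOdd hq h1 0 (Real.sqrt h)
    simp only [zero_add] at hi
    rw [integral_fold hi]
    symm
    apply integral_eq_zero_of_ae
    refine Filter.Eventually.of_forall fun u => ?_
    simp only [Pi.zero_apply, phi_neg, mul_neg, fOdd_neg h1]
    ring
  · exact coupling_integral Z ζ hZmeas hζmeas hZlaw hζlaw hindep hq h1 hh hne

end Coupling


/-- **Theorem (one-step contraction for the full mirror coupling, concave distance).**
Under the Lipschitz and contractivity-at-infinity assumptions on `b`, for every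
`h ∈ (0, h₀¹)` and all `x, y`, the pair `(X', Y')` produced by the untruncated mirror
coupling satisfies `𝔼 f₁(‖X' - Y'‖) ≤ (1 - c₁ h) f₁(‖x - y‖)`. -/
theorem mirror_coupling_contraction_concave
    {d : ℕ} (hd : 1 ≤ d) (b : EuclideanSpace ℝ (Fin d) → EuclideanSpace ℝ (Fin d))
    (L K R : ℝ) (hL : 0 < L) (hK : 0 < K) (hR : 0 < R)
    (hLip : ∀ x y : EuclideanSpace ℝ (Fin d), ‖b x - b y‖ ≤ L * ‖x - y‖)
    (hContr : ∀ x y : EuclideanSpace ℝ (Fin d), R < ‖x - y‖ →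
      @inner ℝ _ _ (x - y) (b x - b y) ≤ -K * ‖x - y‖ ^ 2)
    {Ω : Type*} [MeasureSpace Ω] [IsProbabilityMeasure (ℙ : Measure Ω)]
    (Z : Ω → EuclideanSpace ℝ (Fin d)) (ζ : Ω → ℝ)
    (hZmeas : Measurable Z) (hζmeas : Measurable ζ)
    (hZlaw : Measure.map Z ℙ = stdGaussian d)
    (hζlaw : Measure.map ζ ℙ = volume.restrict (Set.Icc (0:ℝ) 1))
    (hindep : IndepFun Z ζ ℙ)
    (h : ℝ) (hh : h ∈ Set.Ioo 0 (h₀₁ L K R))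
    (x y : EuclideanSpace ℝ (Fin d)) :
    ∫ ω, f₁Dist (qConst L K R) (r₁₁ L K R)
        ‖(x + h • b x + Real.sqrt h • Z ω)
          - mirrorY d h (x + h • b x) (y + h • b y) (Z ω) (ζ ω)‖ ∂ℙ
      ≤ (1 - c₁Const L K R * h) * f₁Dist (qConst L K R) (r₁₁ L K R) ‖x - y‖ := by
  have hc := c0_pos
  obtain ⟨hh0, hh1⟩ := hh
  have hq := q_pos (K := K) hL hR
  obtain ⟨a1, a2, a3, a4⟩ := h0_bounds hL hR hh1.le
  obtain ⟨k1, -, -, -⟩ := h0_bounds (K := K) hL hR le_rfl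
  have hr1a : (1 + h * L) * R ≤ r₁₁ L K R := by
    unfold r₁₁; gcongr
  have hr1b : r₁₁ L K R ≤ 7 / 6 * R := by
    unfold r₁₁
    exact mul_le_mul_of_nonneg_right (by linarith) hR.le
  have hr10 : 0 ≤ r₁₁ L K R := le_trans (by positivity) hr1a
  rw [coupling_integral_le Z ζ hZmeas hζmeas hZlaw hζlaw hindep hq hr10 hh0]
  have hxy : x + h • b x - (y + h • b y) = (x - y) + h • (b x - b y) := by
    rw [smul_sub]; abel
  rw [hxy]
  rcases le_or_gt ‖x - y‖ R with hr | hr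
  · refine le_trans (fOdd_integral_mono hq hr10 _ (ρ' := (1 + h * L) * ‖x - y‖) ?_)
      (near_case hL hR hh0 hr1a a1 a3 a4 (norm_nonneg _) hr)
    refine (norm_add_le _ _).trans ?_
    rw [norm_smul, Real.norm_eq_abs, abs_of_pos hh0]
    nlinarith [mul_le_mul_of_nonneg_left (hLip x y) hh0.le]
  · apply far_case hL hR hh0 hK hr10 hr1b (norm_nonneg _) (norm_nonneg _)
    have hr0 : 0 < ‖x - y‖ := hR.trans hr
    have n1 : ‖(x - y) + h • (b x - b y)‖ ^ 2 ≤ (1 - K * h) * ‖x - y‖ ^ 2 := by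
      rw [norm_add_sq_real, real_inner_smul_right, norm_smul, Real.norm_eq_abs, abs_of_pos hh0,
        mul_pow]
      have c1 := mul_le_mul_of_nonneg_left (hContr x y hr) hh0.le
      have c2 : ‖b x - b y‖ ^ 2 ≤ L ^ 2 * ‖x - y‖ ^ 2 := by
        rw [← mul_pow]; exact pow_le_pow_left₀ (norm_nonneg _) (hLip x y) 2
      have c3 : h ^ 2 * ‖b x - b y‖ ^ 2 ≤ h * K * ‖x - y‖ ^ 2 := by
        calc h ^ 2 * ‖b x - b y‖ ^ 2 ≤ h ^ 2 * (L ^ 2 * ‖x - y‖ ^ 2) := by gcongr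
          _ = h * (h * L ^ 2) * ‖x - y‖ ^ 2 := by ring
          _ ≤ _ := by gcongr
      linarith
    have n2 : 0 ≤ 1 - K * h := by
      by_contra hcon
      push Not at hcon
      have := mul_neg_of_neg_of_pos hcon (by positivity : 0 < ‖x - y‖ ^ 2)
      have := sq_nonneg ‖(x - y) + h • (b x - b y)‖
      linarith
    have hKh : 0 < K * h := by positivity
    have n3 : 0 ≤ (1 - K * h / 2) * ‖x - y‖ := mul_nonneg (by linarith) hr0.le
    apply (pow_le_pow_iff_left₀ (norm_nonneg _) n3 two_ne_zero).1
    refine n1.trans ?_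
    rw [mul_pow]
    apply mul_le_mul_of_nonneg_right _ (by positivity)
    nlinarith [sq_nonneg (K * h)]
end

section
/- Let d ≥ 1, h > 0 and m, H > 0, and let x̂, ŷ ∈ ℝ^d. Then the random vector Y' defined by the coupling construction from the points x̂, ŷ has the same law as ŷ + √h·Z, i.e. the d-dimensional Gaussian law N(ŷ, hI) (the product of one-dimensional Gaussians with means ŷᵢ and variance h). Consequently, the joint law of (X', Y') is a coupling of N(x̂, hI) and N(ŷ, hI). -/
open scoped Classical
open MeasureTheory ProbabilityTheory Real

noncomputable section

/-- Gaussian measure `N(mean, v·I)` on `EuclideanSpace ℝ (Fin d)`: the product of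
one-dimensional Gaussians with means `meanᵢ` and variance `v`. -/
def gaussianVec (d : ℕ) (mean : EuclideanSpace ℝ (Fin d)) (v : NNReal) :
    Measure (EuclideanSpace ℝ (Fin d)) :=
  (Measure.pi fun i : Fin d => gaussianReal (mean i) v).map
    (MeasurableEquiv.toLp 2 (Fin d → ℝ))

/-- The truncated Gaussian density `φ^m_{z,hI}(u) = 1_{|u-z| ≤ m} φ_{z,hI}(u)`. -/
def gaussDensityTrunc (d : ℕ) (h m : ℝ) (z u : EuclideanSpace ℝ (Fin d)) : ℝ :=
  if ‖u - z‖ ≤ m then gaussDensity d h z u else 0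

/-- Second component `Y'` of the truncated mirror coupling with parameters `m, H`,
as a function of the points `x̂, ŷ`, the Gaussian input `z` and the uniform input `t`.
The first component is `X' = x̂ + √h • z`. -/
def couplingY (d : ℕ) (h m H : ℝ) (xh yh : EuclideanSpace ℝ (Fin d))
    (z : EuclideanSpace ℝ (Fin d)) (t : ℝ) : EuclideanSpace ℝ (Fin d) :=
  if ‖Real.sqrt h • z‖ < m ∧ ‖xh - yh‖ ≤ H then
    (if t ≤ min (gaussDensityTrunc d h m yh (xh + Real.sqrt h • z))
              (gaussDensityTrunc d h m xh (xh + Real.sqrt h • z))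
            / gaussDensityTrunc d h m xh (xh + Real.sqrt h • z)
      then xh + Real.sqrt h • z
      else yh + Real.sqrt h • reflect d xh yh z)
  else yh + Real.sqrt h • z

end

lemma aux_map_std {d : ℕ} (h : ℝ) (hh : 0 < h) (x : EuclideanSpace ℝ (Fin d)) :
    (_root_.stdGaussian d).map (fun z => x + Real.sqrt h • z) = gaussianVec d x h.toNNReal := by
  unfold _root_.stdGaussian gaussianVec
  have h1 : ∀ i : Fin d, gaussianReal (x i) h.toNNReal
      = (gaussianReal 0 1).map (fun s : ℝ => x i + Real.sqrt h * s) := by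
    intro i
    have : (fun s : ℝ => x i + Real.sqrt h * s) = (fun s => x i + s) ∘ (fun s => Real.sqrt h * s) := rfl
    rw [this, ← Measure.map_map (by fun_prop) (by fun_prop), gaussianReal_map_const_mul,
      gaussianReal_map_const_add]
    congr 1
    · simp
    · ext; simp [hh.le, Real.sq_sqrt]
  simp_rw [h1]
  rw [← Measure.pi_map_pi (fun i => by fun_prop), Measure.map_map (by fun_prop) (by fun_prop),
    Measure.map_map (by fun_prop) (by fun_prop)]
  rfl

lemma aux_density_pi {d : ℕ} (v : NNReal) (hv : v ≠ 0) (x : Fin d → ℝ) :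
    (Measure.pi fun i : Fin d => gaussianReal (x i) v)
      = (volume : Measure (Fin d → ℝ)).withDensity
          (fun u => ENNReal.ofReal (∏ i, gaussianPDFReal (x i) v (u i))) := by
  refine Measure.pi_eq fun s hs => ?_
  rw [withDensity_apply _ (MeasurableSet.univ_pi hs), volume_pi, Measure.restrict_pi_pi]
  rw [← ofReal_integral_eq_lintegral_ofReal]
  · rw [integral_fintype_prod_eq_prod, ENNReal.ofReal_prod_of_nonneg]
    · refine Finset.prod_congr rfl fun i _ => ?_
      rw [gaussianReal_apply_eq_integral _ hv]
    · intro i _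
      exact integral_nonneg fun _ => gaussianPDFReal_nonneg _ _ _
  · exact Integrable.fintype_prod_dep fun i => (integrable_gaussianPDFReal _ _).restrict
  · exact Filter.Eventually.of_forall fun u =>
      Finset.prod_nonneg fun i _ => gaussianPDFReal_nonneg _ _ _

lemma aux_meas_dens {d : ℕ} (h : ℝ) (x : EuclideanSpace ℝ (Fin d)) :
    Measurable (gaussDensity d h x) := by
  unfold gaussDensity; fun_prop

lemma aux_density {d : ℕ} (h : ℝ) (hh : 0 < h) (x : EuclideanSpace ℝ (Fin d)) :
    gaussianVec d x h.toNNReal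
      = (volume : Measure (EuclideanSpace ℝ (Fin d))).withDensity
          (fun u => ENNReal.ofReal (gaussDensity d h x u)) := by
  unfold gaussianVec
  rw [aux_density_pi _ (by simpa using hh)]
  have hmp := PiLp.volume_preserving_toLp (Fin d)
  ext s hs
  rw [Measure.map_apply (by fun_prop) hs, withDensity_apply _ hs,
    withDensity_apply _ ((MeasurableEquiv.toLp 2 (Fin d → ℝ)).measurable hs)]
  have := hmp.setLIntegral_comp_preimage hs (f := fun u => ENNReal.ofReal (gaussDensity d h x u))
    (aux_meas_dens h x).ennreal_ofReal
  rw [← this]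
  refine lintegral_congr fun u => ?_
  congr 1
  simp only [gaussianPDFReal, gaussDensity]
  rw [Finset.prod_mul_distrib, ← Real.exp_sum]
  congr 1
  · rw [Finset.prod_const, Real.coe_toNNReal _ hh.le]
    simp only [Finset.card_univ, Fintype.card_fin]
    rw [Real.sqrt_eq_rpow, ← Real.rpow_neg (by positivity), ← Real.rpow_natCast,
      ← Real.rpow_mul (by positivity)]
    congr 1; ring
  · rw [Real.coe_toNNReal _ hh.le, EuclideanSpace.norm_sq_eq, ← Finset.sum_div,
      Finset.sum_neg_distrib]
    simp

lemma aux_reflect {d : ℕ} (x y : EuclideanSpace ℝ (Fin d)) :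
    ∃ R : EuclideanSpace ℝ (Fin d) ≃ₗᵢ[ℝ] EuclideanSpace ℝ (Fin d),
      (∀ u, reflect d x y u = R u) ∧ R (x - y) = y - x := by
  by_cases hxy : x = y
  · subst hxy
    exact ⟨LinearIsometryEquiv.refl ℝ _, fun u => by simp [reflect], by simp⟩
  · refine ⟨Submodule.reflection (Submodule.span ℝ {x - y})ᗮ, fun u => ?_, ?_⟩
    · rw [Submodule.reflection_orthogonal_apply, Submodule.reflection_singleton_apply]
      simp only [reflect, if_neg hxy, inner_smul_left, smul_smul]
      have : ‖x - y‖ ≠ 0 := norm_ne_zero_iff.2 (sub_ne_zero.2 hxy)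
      rw [neg_sub, two_smul, ← add_smul]
      congr 2
      simp
      field_simp
      ring
    · rw [Submodule.reflection_orthogonalComplement_singleton_eq_neg, neg_sub]

lemma aux_inner {E : Type*} [MeasurableSpace E] (a : ℝ) (ha0 : 0 ≤ a) (ha1 : a ≤ 1) (p q : E)
    (B : Set E) :
    ∫⁻ t in Set.Icc (0:ℝ) 1, B.indicator (1 : E → ENNReal) (if t ≤ a then p else q)
      = ENNReal.ofReal a * B.indicator 1 p + ENNReal.ofReal (1 - a) * B.indicator 1 q := by
  have h1 : ∀ t : ℝ, B.indicator (1 : E → ENNReal) (if t ≤ a then p else q)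
      = (Set.Iic a).indicator (fun _ => B.indicator 1 p) t
        + (Set.Ioi a).indicator (fun _ => B.indicator 1 q) t := by
    intro t
    by_cases h : t ≤ a
    · simp [h]
    · simp [h, not_le.1 h]
  simp_rw [h1]
  rw [lintegral_add_left (measurable_const.indicator measurableSet_Iic),
    lintegral_indicator_const measurableSet_Iic, lintegral_indicator_const measurableSet_Ioi,
    Measure.restrict_apply measurableSet_Iic, Measure.restrict_apply measurableSet_Ioi]
  have e1 : Set.Iic a ∩ Set.Icc 0 1 = Set.Icc 0 a := by
    ext t; simp; constructor
    · rintro ⟨_, _, _⟩; constructor <;> linarith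
    · rintro ⟨_, _⟩; refine ⟨?_, ?_, ?_⟩ <;> linarith
  have e2 : Set.Ioi a ∩ Set.Icc 0 1 = Set.Ioc a 1 := by
    ext t; simp only [Set.mem_inter_iff, Set.mem_Ioi, Set.mem_Icc, Set.mem_Ioc]; constructor
    · rintro ⟨_, _, _⟩; constructor <;> linarith
    · rintro ⟨_, _⟩; refine ⟨?_, ?_, ?_⟩ <;> linarith
  rw [e1, e2, Real.volume_Icc, Real.volume_Ioc, sub_zero, mul_comm, mul_comm (B.indicator 1 q)]

lemma aux_dens_pos {d : ℕ} (h : ℝ) (hh : 0 < h) (x u : EuclideanSpace ℝ (Fin d)) :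
    0 < gaussDensity d h x u := by
  unfold gaussDensity; positivity

lemma aux_trunc_nonneg {d : ℕ} (h m : ℝ) (hh : 0 < h) (x u : EuclideanSpace ℝ (Fin d)) :
    0 ≤ gaussDensityTrunc d h m x u := by
  unfold gaussDensityTrunc
  split_ifs
  · exact (aux_dens_pos h hh x u).le
  · exact le_rfl

lemma aux_meas_trunc {d : ℕ} (h m : ℝ) (x : EuclideanSpace ℝ (Fin d)) :
    Measurable (gaussDensityTrunc d h m x) := by
  unfold gaussDensityTrunc
  exact Measurable.ite (measurableSet_le (by fun_prop) (by fun_prop)) (aux_meas_dens h x)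
    measurable_const

/-- acceptance probability -/
noncomputable def auxAcc (d : ℕ) (h m : ℝ) (x y u : EuclideanSpace ℝ (Fin d)) : ℝ :=
  min (gaussDensityTrunc d h m y u) (gaussDensityTrunc d h m x u) / gaussDensityTrunc d h m x u

lemma aux_meas_acc {d : ℕ} (h m : ℝ) (x y : EuclideanSpace ℝ (Fin d)) :
    Measurable (auxAcc d h m x y) := by
  unfold auxAcc
  exact ((aux_meas_trunc h m y).min (aux_meas_trunc h m x)).div (aux_meas_trunc h m x)

lemma aux_acc_nonneg {d : ℕ} (h m : ℝ) (hh : 0 < h) (x y u : EuclideanSpace ℝ (Fin d)) :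
    0 ≤ auxAcc d h m x y u :=
  div_nonneg (le_min (aux_trunc_nonneg h m hh y u) (aux_trunc_nonneg h m hh x u))
    (aux_trunc_nonneg h m hh x u)

lemma aux_acc_le_one {d : ℕ} (h m : ℝ) (hh : 0 < h) (x y u : EuclideanSpace ℝ (Fin d)) :
    auxAcc d h m x y u ≤ 1 :=
  div_le_one_of_le₀ (min_le_right _ _) (aux_trunc_nonneg h m hh x u)

lemma aux_dens_mul_acc {d : ℕ} (h m : ℝ) (hh : 0 < h) (x y u : EuclideanSpace ℝ (Fin d))
    (hu : ‖u - x‖ ≤ m) : gaussDensity d h x u * auxAcc d h m x y u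
      = min (gaussDensityTrunc d h m y u) (gaussDensityTrunc d h m x u) := by
  have h1 : gaussDensityTrunc d h m x u = gaussDensity d h x u := if_pos hu
  have := (aux_dens_pos h hh x u).ne'
  unfold auxAcc
  rw [h1]
  field_simp

/-- The map in the coordinate `u = x + sqrt h z`. -/
noncomputable def auxF (d : ℕ) (h m : ℝ) (x y : EuclideanSpace ℝ (Fin d))
    (R : EuclideanSpace ℝ (Fin d) ≃ₗᵢ[ℝ] EuclideanSpace ℝ (Fin d))
    (q : EuclideanSpace ℝ (Fin d) × ℝ) : EuclideanSpace ℝ (Fin d) :=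
  if ‖q.1 - x‖ < m then
    (if q.2 ≤ auxAcc d h m x y q.1 then q.1 else y + R (q.1 - x))
  else y + (q.1 - x)

lemma aux_meas_F {d : ℕ} (h m : ℝ) (x y : EuclideanSpace ℝ (Fin d))
    (R : EuclideanSpace ℝ (Fin d) ≃ₗᵢ[ℝ] EuclideanSpace ℝ (Fin d)) :
    Measurable (auxF d h m x y R) := by
  have hR : Measurable R := R.continuous.measurable
  unfold auxF
  refine Measurable.ite (measurableSet_lt (by fun_prop) (by fun_prop)) ?_ (by fun_prop)
  exact Measurable.ite (measurableSet_le (by fun_prop) ((aux_meas_acc h m x y).comp measurable_fst))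
    (by fun_prop) (by fun_prop)

/-- Truncated accepted part. -/
noncomputable def auxQ (d : ℕ) (h m : ℝ) (x y u : EuclideanSpace ℝ (Fin d)) : ENNReal :=
  if ‖u - x‖ < m then
    ENNReal.ofReal (gaussDensity d h x u) * ENNReal.ofReal (auxAcc d h m x y u) else 0

/-- Truncated rejected part. -/
noncomputable def auxG (d : ℕ) (h m : ℝ) (x y u : EuclideanSpace ℝ (Fin d)) : ENNReal :=
  if ‖u - x‖ < m then
    ENNReal.ofReal (gaussDensity d h x u) * ENNReal.ofReal (1 - auxAcc d h m x y u) else 0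

/-- Outer part. -/
noncomputable def auxO (d : ℕ) (h m : ℝ) (x u : EuclideanSpace ℝ (Fin d)) : ENNReal :=
  if ‖u - x‖ < m then 0 else ENNReal.ofReal (gaussDensity d h x u)

lemma aux_meas_Q {d : ℕ} (h m : ℝ) (x y : EuclideanSpace ℝ (Fin d)) :
    Measurable (auxQ d h m x y) :=
  Measurable.ite (measurableSet_lt (by fun_prop) (by fun_prop))
    ((aux_meas_dens h x).ennreal_ofReal.mul (aux_meas_acc h m x y).ennreal_ofReal) measurable_const

lemma aux_meas_G {d : ℕ} (h m : ℝ) (x y : EuclideanSpace ℝ (Fin d)) :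
    Measurable (auxG d h m x y) :=
  Measurable.ite (measurableSet_lt (by fun_prop) (by fun_prop))
    ((aux_meas_dens h x).ennreal_ofReal.mul
      (measurable_const.sub (aux_meas_acc h m x y)).ennreal_ofReal) measurable_const

lemma aux_meas_O {d : ℕ} (h m : ℝ) (x : EuclideanSpace ℝ (Fin d)) :
    Measurable (auxO d h m x) :=
  Measurable.ite (measurableSet_lt (by fun_prop) (by fun_prop))
    measurable_const (aux_meas_dens h x).ennreal_ofReal

lemma aux_sum {d : ℕ} (h m : ℝ) (hh : 0 < h) (x y u : EuclideanSpace ℝ (Fin d)) :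
    auxQ d h m x y u + auxG d h m x y u + auxO d h m x u
      = ENNReal.ofReal (gaussDensity d h x u) := by
  unfold auxQ auxG auxO
  split_ifs
  · rw [← mul_add, ← ENNReal.ofReal_add (aux_acc_nonneg h m hh x y u)
      (sub_nonneg.2 (aux_acc_le_one h m hh x y u))]
    simp
  · simp

lemma aux_Q_swap {d : ℕ} (h m : ℝ) (hh : 0 < h) (x y u : EuclideanSpace ℝ (Fin d))
    (hx : ‖u - x‖ ≠ m) (hy : ‖u - y‖ ≠ m) : auxQ d h m x y u = auxQ d h m y x u := by
  have key : ∀ x y : EuclideanSpace ℝ (Fin d), ‖u - x‖ ≠ m → ‖u - y‖ ≠ m →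
      auxQ d h m x y u = ENNReal.ofReal
        (min (gaussDensityTrunc d h m y u) (gaussDensityTrunc d h m x u)) := by
    intro x y hx hy
    unfold auxQ
    split_ifs with hlt
    · rw [← ENNReal.ofReal_mul (aux_dens_pos h hh x u).le, aux_dens_mul_acc h m hh x y u hlt.le]
    · have : gaussDensityTrunc d h m x u = 0 :=
        if_neg fun hle => hlt (lt_of_le_of_ne hle hx)
      rw [this, min_eq_right (aux_trunc_nonneg h m hh y u), ENNReal.ofReal_zero]
  rw [key x y hx hy, key y x hy hx, min_comm]

lemma aux_G_refl {d : ℕ} (h m : ℝ) (x y : EuclideanSpace ℝ (Fin d))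
    (R : EuclideanSpace ℝ (Fin d) ≃ₗᵢ[ℝ] EuclideanSpace ℝ (Fin d)) (hR : R (x - y) = y - x)
    (u : EuclideanSpace ℝ (Fin d)) :
    auxG d h m x y u = auxG d h m y x (y + R (u - x)) := by
  have n1 : ‖y + R (u - x) - y‖ = ‖u - x‖ := by
    rw [add_sub_cancel_left, R.norm_map]
  have n2 : ‖y + R (u - x) - x‖ = ‖u - y‖ := by
    have : y + R (u - x) - x = R (u - y) := by
      have e : u - y = (u - x) + (x - y) := by abel
      rw [e, map_add, hR]; abel
    rw [this, R.norm_map]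
  simp only [auxG, auxAcc, gaussDensityTrunc, gaussDensity, n1, n2]

lemma aux_law {d : ℕ} (h m : ℝ) (hh : 0 < h) (hm : 0 < m)
    (x y : EuclideanSpace ℝ (Fin d))
    (R : EuclideanSpace ℝ (Fin d) ≃ₗᵢ[ℝ] EuclideanSpace ℝ (Fin d)) (hR : R (x - y) = y - x) :
    ((gaussianVec d x h.toNNReal).prod (volume.restrict (Set.Icc (0:ℝ) 1))).map
      (auxF d h m x y R) = gaussianVec d y h.toNNReal := by
  rw [aux_density h hh x, aux_density h hh y]
  ext B hB
  have hBm : Measurable (B.indicator (1 : EuclideanSpace ℝ (Fin d) → ENNReal)) :=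
    measurable_one.indicator hB
  have hT : MeasurePreserving (fun u : EuclideanSpace ℝ (Fin d) => y + R (u - x)) :=
    (measurePreserving_add_left volume y).comp
      (R.measurePreserving.comp (measurePreserving_sub_right volume x))
  have hS : MeasurePreserving (fun u : EuclideanSpace ℝ (Fin d) => y + (u - x)) :=
    (measurePreserving_add_left volume y).comp (measurePreserving_sub_right volume x)
  have hBF : Measurable fun q => B.indicator (1 : EuclideanSpace ℝ (Fin d) → ENNReal)
      (auxF d h m x y R q) := hBm.comp (aux_meas_F h m x y R)
  rw [← lintegral_indicator_one hB, lintegral_map hBm (aux_meas_F h m x y R),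
    lintegral_prod _ hBF.aemeasurable,
    lintegral_withDensity_eq_lintegral_mul _ (aux_meas_dens h x).ennreal_ofReal
      hBF.lintegral_prod_right', withDensity_apply _ hB,
    ← lintegral_indicator hB]
  have e1 : ∀ u, ((fun u => ENNReal.ofReal (gaussDensity d h x u)) *
      fun u => ∫⁻ t in Set.Icc (0:ℝ) 1, B.indicator 1 (auxF d h m x y R (u, t))) u
      = auxQ d h m x y u * B.indicator 1 u + auxG d h m x y u * B.indicator 1 (y + R (u - x))
        + auxO d h m x u * B.indicator 1 (y + (u - x)) := by
    intro u
    simp only [Pi.mul_apply, auxF, auxQ, auxG, auxO]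
    split_ifs with hu
    · rw [aux_inner _ (aux_acc_nonneg h m hh x y u) (aux_acc_le_one h m hh x y u)]
      ring
    · simp
  have e2 : ∀ u, B.indicator (fun u => ENNReal.ofReal (gaussDensity d h y u)) u
      = auxQ d h m y x u * B.indicator 1 u + auxG d h m y x u * B.indicator 1 u
        + auxO d h m y u * B.indicator 1 u := by
    intro u
    rw [← add_mul, ← add_mul, aux_sum h m hh]
    by_cases hu : u ∈ B <;> simp [hu]
  have mQ : ∀ x y, Measurable fun u => auxQ d h m x y u * B.indicator (1 : EuclideanSpace ℝ (Fin d) → ENNReal) u := fun x y => (aux_meas_Q (d := d) h m x y).mul hBm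
  have mG : Measurable fun u => auxG d h m y x u * B.indicator (1 : EuclideanSpace ℝ (Fin d) → ENNReal) u :=
    (aux_meas_G (d := d) h m y x).mul hBm
  have mO : Measurable fun u => auxO d h m y u * B.indicator (1 : EuclideanSpace ℝ (Fin d) → ENNReal) u :=
    (aux_meas_O (d := d) h m y).mul hBm
  have mG2 : Measurable fun u => auxG d h m x y u * B.indicator 1 (y + R (u - x)) :=
    (aux_meas_G h m x y).mul (hBm.comp hT.measurable)
  have mS1 : Measurable fun u => auxQ d h m x y u * B.indicator (1 : EuclideanSpace ℝ (Fin d) → ENNReal) u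
      + auxG d h m x y u * B.indicator 1 (y + R (u - x)) := (mQ x y).add mG2
  have mS2 : Measurable fun u => auxQ d h m y x u * B.indicator (1 : EuclideanSpace ℝ (Fin d) → ENNReal) u
      + auxG d h m y x u * B.indicator 1 u := (mQ y x).add mG
  rw [lintegral_congr e1, lintegral_congr e2, lintegral_add_left mS1,
    lintegral_add_left (mQ x y), lintegral_add_left mS2,
    lintegral_add_left (mQ y x)]
  congr 1
  · congr 1
    · refine lintegral_congr_ae ?_
      have s1 : ∀ x : EuclideanSpace ℝ (Fin d), ∀ᵐ u, ‖u - x‖ ≠ m := by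
        intro x
        have := Measure.addHaar_sphere_of_ne_zero
          (volume : Measure (EuclideanSpace ℝ (Fin d))) x hm.ne'
        rw [ae_iff]
        convert this using 2
        ext u; simp [dist_eq_norm]
      filter_upwards [s1 x, s1 y] with u h1 h2
      rw [aux_Q_swap h m hh x y u h1 h2]
    · rw [← hT.lintegral_comp mG]
      exact lintegral_congr fun u => by rw [aux_G_refl h m x y R hR u]
  · rw [← hS.lintegral_comp mO]
    refine lintegral_congr fun u => ?_
    have : auxO d h m x u = auxO d h m y (y + (u - x)) := by
      simp only [auxO, gaussDensity, add_sub_cancel_left]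
    rw [this]


/-- **Theorem (the construction is a coupling of the two Gaussian laws).**
The random vector `Y'` defined by the coupling construction from the points `x̂, ŷ` has law
`N(ŷ, hI)`; consequently the joint law of `(X', Y')` is a coupling of `N(x̂, hI)` and
`N(ŷ, hI)` (both marginals are the respective Gaussians). -/
theorem couplingY_law
    {d : ℕ} (hd : 1 ≤ d) (h m H : ℝ) (hh : 0 < h) (hm : 0 < m) (hH : 0 < H)
    (xh yh : EuclideanSpace ℝ (Fin d))
    {Ω : Type*} [MeasureSpace Ω] [IsProbabilityMeasure (ℙ : Measure Ω)]
    (Z : Ω → EuclideanSpace ℝ (Fin d)) (ζ : Ω → ℝ)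
    (hZmeas : Measurable Z) (hζmeas : Measurable ζ)
    (hZlaw : Measure.map Z ℙ = stdGaussian d)
    (hζlaw : Measure.map ζ ℙ = volume.restrict (Set.Icc (0:ℝ) 1))
    (hindep : IndepFun Z ζ ℙ) :
    Measure.map (fun ω => couplingY d h m H xh yh (Z ω) (ζ ω)) ℙ
        = gaussianVec d yh h.toNNReal
      ∧ Measure.map (fun ω => xh + Real.sqrt h • Z ω) ℙ
        = gaussianVec d xh h.toNNReal := by
  have hX : Measure.map (fun ω => xh + Real.sqrt h • Z ω) ℙ = gaussianVec d xh h.toNNReal := by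
    rw [← aux_map_std h hh xh, ← hZlaw, Measure.map_map (by fun_prop) hZmeas]
    rfl
  refine ⟨?_, hX⟩
  by_cases hr : ‖xh - yh‖ ≤ H
  · obtain ⟨R, hR1, hR2⟩ := aux_reflect xh yh
    rw [← aux_law h m hh hm xh yh R hR2, ← hX, ← hζlaw]
    have hi : IndepFun (fun ω => xh + Real.sqrt h • Z ω) ζ ℙ :=
      hindep.comp (φ := fun z => xh + Real.sqrt h • z) (ψ := id) (by fun_prop) measurable_id
    rw [← hi.map_prod_eq_prod_map_map (by fun_prop) (by fun_prop),
      Measure.map_map (aux_meas_F h m xh yh R) (by fun_prop)]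
    congr 1
    funext ω
    simp only [couplingY, auxF, Function.comp, hr, and_true, add_sub_cancel_left, hR1, map_smul,
      auxAcc]
  · rw [← aux_map_std h hh yh, ← hZlaw, Measure.map_map (by fun_prop) hZmeas]
    congr 1
    funext ω
    simp [couplingY, hr]
end

section
/- Let d ≥ 1, h > 0 and m, H > 0, let x̂, ŷ ∈ ℝ^d, and let (X', Y') be given by the coupling construction from the points x̂, ŷ. Then 𝔼|X' − Y'| = |x̂ − ŷ|; that is, the coupling preserves the first moment of the distance. -/
open scoped Classical
open MeasureTheory ProbabilityTheory Real

section aux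

lemma pi_gauss_eq (d : ℕ) : (Measure.pi fun _ : Fin d => gaussianReal 0 1) =
    (volume : Measure (Fin d → ℝ)).withDensity
      (fun x => ENNReal.ofReal (∏ i, gaussianPDFReal 0 1 (x i))) := by
  refine Measure.pi_eq fun s hs => ?_
  have hint : Integrable (fun x : Fin d → ℝ => ∏ i, gaussianPDFReal 0 1 (x i))
      (Measure.pi fun i => (volume : Measure ℝ).restrict (s i)) :=
    Integrable.fintype_prod (f := fun _ => gaussianPDFReal 0 1)
      (fun i => (integrable_gaussianPDFReal 0 1).restrict)
  rw [withDensity_apply _ (MeasurableSet.univ_pi hs), volume_pi, Measure.restrict_pi_pi,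
    ← ofReal_integral_eq_lintegral_ofReal hint
      (Filter.Eventually.of_forall fun x => Finset.prod_nonneg fun i _ => gaussianPDFReal_nonneg _ _ _),
    integral_fintype_prod_eq_prod (f := fun _ => gaussianPDFReal 0 1),
    ENNReal.ofReal_prod_of_nonneg
      (fun i _ => integral_nonneg fun x => gaussianPDFReal_nonneg _ _ _)]
  refine Finset.prod_congr rfl fun i _ => ?_
  rw [gaussianReal_apply_eq_integral _ one_ne_zero]

lemma integral_stdGauss (d : ℕ) (F : EuclideanSpace ℝ (Fin d) → ℝ) :
    ∫ z, F z ∂(_root_.stdGaussian d) =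
      (√(2 * π))⁻¹ ^ d * ∫ z : EuclideanSpace ℝ (Fin d), rexp (-‖z‖ ^ 2 / 2) * F z := by
  have hm : Measurable (fun x : Fin d → ℝ => ∏ i, gaussianPDFReal 0 1 (x i)) := by
    fun_prop
  rw [_root_.stdGaussian, integral_map_equiv, pi_gauss_eq,
    integral_withDensity_eq_integral_toReal_smul hm.ennreal_ofReal
      (Filter.Eventually.of_forall fun x => ENNReal.ofReal_lt_top),
    ← (PiLp.volume_preserving_toLp (Fin d)).integral_comp
      (MeasurableEquiv.toLp 2 (Fin d → ℝ)).measurableEmbedding, ← integral_const_mul]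
  refine integral_congr_ae (Filter.Eventually.of_forall fun x => ?_)
  have h1 : ∏ i, gaussianPDFReal 0 1 (x i) =
      (√(2 * π))⁻¹ ^ d * rexp (-‖(WithLp.toLp 2 x : EuclideanSpace ℝ (Fin d))‖ ^ 2 / 2) := by
    simp only [gaussianPDFReal, Finset.prod_mul_distrib, Finset.prod_const, Finset.card_univ,
      Fintype.card_fin, ← Real.exp_sum, EuclideanSpace.norm_sq_eq]
    congr 1
    · simp
    · congr 1
      simp [Finset.sum_div, neg_div, Finset.sum_neg_distrib]
  simp only [smul_eq_mul]
  rw [ENNReal.toReal_ofReal (Finset.prod_nonneg fun i _ => gaussianPDFReal_nonneg _ _ _), h1,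
    mul_assoc]
  rfl

/-- Symmetrisation identity. -/
lemma sym_integral {E : Type*} [NormedAddCommGroup E] [InnerProductSpace ℝ E]
    [FiniteDimensional ℝ E] [MeasurableSpace E] [BorelSpace E]
    (q l : E → ℝ) (b : E) (r : ℝ) (hl : Continuous l)
    (hq : ∀ z, q (-z) = q z) (h1 : ∀ z, l (-b - z) = - l z) (h2 : ∀ z, l z = l (z - b) + 2 * r)
    (hi : ∀ g : E → ℝ, Continuous g → Integrable (fun z => g z * q z)) :
    Integrable (fun z => max (l z) 0 * (q z - q (z + b))) ∧
    ∫ z, max (l z) 0 * (q z - q (z + b)) = r * ∫ z, q z := by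
  have hi' : ∀ g : E → ℝ, Continuous g → Integrable (fun z => g z * q (z + b)) := by
    intro g hg
    have := (hi (fun z => g (z - b)) (by fun_prop)).comp_add_right b
    simpa using this
  have hP : Integrable (fun z => max (l z) 0 * (q z - q (z + b))) := by
    simp only [mul_sub]
    exact (hi _ (by fun_prop)).sub (hi' _ (by fun_prop))
  refine ⟨hP, ?_⟩
  have e1 := integral_sub_left_eq_self (fun z => max (l z) 0 * (q z - q (z + b))) volume (-b)
  have e2 : ∫ z, max (l z) 0 * (q z - q (z + b)) +
      max (l (-b - z)) 0 * (q (-b - z) - q (-b - z + b)) = 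
      ∫ z, l z * q z - l z * q (z + b) := by
    congr 1
    ext z
    rw [h1, show -b - z = -(z + b) by abel, show -(z+b)+b = -z by abel, hq, hq]
    rcases le_total (l z) 0 with h | h
    · rw [max_eq_right h, max_eq_left (by linarith)]; ring
    · rw [max_eq_left h, max_eq_right (by linarith)]; ring
  rw [integral_add hP (hP.comp_sub_left (-b)), e1, integral_sub (hi _ hl) (hi' _ hl)] at e2
  have e3 := integral_add_right_eq_self (μ := volume) (fun z => l (z - b) * q z) b
  simp only [add_sub_cancel_right] at e3
  rw [e3, ← integral_sub (hi _ hl) (hi (fun z => l (z-b)) (by fun_prop))] at e2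
  have e4 : ∫ z, l z * q z - l (z - b) * q z = 2 * r * ∫ z, q z := by
    rw [← integral_const_mul]
    congr 1; ext z
    rw [h2 z]; ring
  linarith

end aux

section aux2

lemma unif_integral (ρ L : ℝ) (h0 : 0 ≤ ρ) (h1 : ρ ≤ 1) :
    ∫ t in Set.Icc (0:ℝ) 1, (if t ≤ ρ then 0 else L) = L * (1 - ρ) := by
  have e : (fun t : ℝ => if t ≤ ρ then 0 else L) = (Set.Ioi ρ).indicator (fun _ => L) := by
    ext t
    by_cases h : t ≤ ρ
    · simp [h]
    · simp [h, not_le.1 h]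
  have e2 : Set.Icc (0:ℝ) 1 ∩ Set.Ioi ρ = Set.Ioc ρ 1 := by
    ext t
    simp only [Set.mem_inter_iff, Set.mem_Icc, Set.mem_Ioi, Set.mem_Ioc]
    constructor
    · rintro ⟨⟨_, h⟩, h'⟩; exact ⟨h', h⟩
    · rintro ⟨h, h'⟩; exact ⟨⟨by linarith, h'⟩, h⟩
  rw [e, setIntegral_indicator measurableSet_Ioi, e2, setIntegral_const]
  simp [measureReal_def, h1, mul_comm]

/-- Unnormalised truncated Gaussian density in the variable `z`. -/
noncomputable def qf (d : ℕ) (s m : ℝ) (z : EuclideanSpace ℝ (Fin d)) : ℝ :=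
  if ‖s • z‖ ≤ m then rexp (-‖z‖ ^ 2 / 2) else 0

/-- The signed distance after a reflection. -/
noncomputable def lf (d : ℕ) (s : ℝ) (a z : EuclideanSpace ℝ (Fin d)) : ℝ :=
  ‖a‖ + 2 * s * inner ℝ (‖a‖⁻¹ • a) z

lemma qf_nonneg (d : ℕ) (s m : ℝ) (z) : 0 ≤ qf d s m z := by
  unfold qf; split_ifs <;> positivity

lemma qf_meas (d : ℕ) (s m : ℝ) : Measurable (qf d s m) := by
  unfold qf
  exact Measurable.ite (measurableSet_le (by fun_prop) (by fun_prop)) (by fun_prop) (by fun_prop)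

lemma qf_int (d : ℕ) (s m : ℝ) (hs : 0 < s) (g : EuclideanSpace ℝ (Fin d) → ℝ)
    (hg : Continuous g) : Integrable (fun z => g z * qf d s m z) := by
  have e : (fun z => g z * qf d s m z) =
      (Metric.closedBall 0 (m / s)).indicator (fun z => g z * rexp (-‖z‖ ^ 2 / 2)) := by
    ext z
    unfold qf
    have : ‖s • z‖ ≤ m ↔ z ∈ Metric.closedBall (0 : EuclideanSpace ℝ (Fin d)) (m / s) := by
      rw [norm_smul, Real.norm_of_nonneg hs.le, mem_closedBall_zero_iff, le_div_iff₀ hs, mul_comm]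
    by_cases h : ‖s • z‖ ≤ m
    · rw [if_pos h, Set.indicator_of_mem (this.1 h)]
    · rw [if_neg h, Set.indicator_of_notMem (fun h' => h (this.2 h')), mul_zero]
  rw [e, integrable_indicator_iff Metric.isClosed_closedBall.measurableSet]
  exact (by fun_prop : Continuous fun z => g z * rexp (-‖z‖ ^ 2 / 2)).continuousOn.integrableOn_compact
    (isCompact_closedBall _ _)

lemma lf_mul (d : ℕ) (s : ℝ) (hs : 0 < s) (a z : EuclideanSpace ℝ (Fin d)) (ha : a ≠ 0) :
    ‖a‖ * lf d s a z = s ^ 2 * (‖z + s⁻¹ • a‖ ^ 2 - ‖z‖ ^ 2) := by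
  have hr : ‖a‖ ≠ 0 := norm_ne_zero_iff.2 ha
  unfold lf
  rw [norm_add_sq_real, norm_smul, real_inner_smul_left, real_inner_smul_right,
    real_inner_comm, norm_inv, Real.norm_of_nonneg hs.le]
  field_simp
  ring

lemma inner_unit (d : ℕ) (s : ℝ) (hs : 0 < s) (a : EuclideanSpace ℝ (Fin d)) (ha : a ≠ 0) :
    s * inner ℝ (‖a‖⁻¹ • a) (s⁻¹ • a) = ‖a‖ := by
  have hr : ‖a‖ ≠ 0 := norm_ne_zero_iff.2 ha
  rw [real_inner_smul_left, real_inner_smul_right, real_inner_self_eq_norm_sq]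
  field_simp

lemma lf_neg (d : ℕ) (s : ℝ) (hs : 0 < s) (a z : EuclideanSpace ℝ (Fin d)) (ha : a ≠ 0) :
    lf d s a (-(s⁻¹ • a) - z) = - lf d s a z := by
  have := inner_unit d s hs a ha
  unfold lf
  rw [inner_sub_right, inner_neg_right]
  linear_combination (-2) * this

lemma lf_shift (d : ℕ) (s : ℝ) (hs : 0 < s) (a z : EuclideanSpace ℝ (Fin d)) (ha : a ≠ 0) :
    lf d s a z = lf d s a (z - s⁻¹ • a) + 2 * ‖a‖ := by
  have := inner_unit d s hs a ha
  unfold lf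
  rw [inner_sub_right]
  linear_combination 2 * this

lemma lf_abs (d : ℕ) (s : ℝ) (hs : 0 < s) (a z : EuclideanSpace ℝ (Fin d)) (ha : a ≠ 0) :
    |lf d s a z| ≤ ‖a‖ + 2 * ‖s • z‖ := by
  have hr : ‖a‖ ≠ 0 := norm_ne_zero_iff.2 ha
  have h1 : |inner ℝ (‖a‖⁻¹ • a) z| ≤ ‖z‖ := by
    refine (abs_real_inner_le_norm _ _).trans ?_
    rw [norm_smul, norm_inv, norm_norm, inv_mul_cancel₀ hr, one_mul]
  rw [norm_smul, Real.norm_of_nonneg hs.le]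
  unfold lf
  refine (abs_add_le _ _).trans ?_
  rw [abs_mul, abs_of_nonneg (norm_nonneg a), abs_of_pos (by positivity : 0 < 2 * s)]
  nlinarith

lemma trunc_eq (d : ℕ) (h m : ℝ) (hh : 0 < h) (c u z : EuclideanSpace ℝ (Fin d))
    (e : u - c = √h • z) :
    gaussDensityTrunc d h m c u = (2 * π * h) ^ (-(d : ℝ) / 2) * qf d (√h) m z := by
  unfold gaussDensityTrunc gaussDensity qf
  rw [e]
  have : -‖√h • z‖ ^ 2 / (2 * h) = -‖z‖ ^ 2 / 2 := by
    rw [norm_smul, mul_pow, Real.norm_of_nonneg (Real.sqrt_nonneg h), Real.sq_sqrt hh.le]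
    field_simp
  rw [this]
  split_ifs <;> simp

/-- Closed form of the distance. -/
noncomputable def Nf (d : ℕ) (s m : ℝ) (a z : EuclideanSpace ℝ (Fin d)) (t : ℝ) : ℝ :=
  if ‖s • z‖ < m then
    (if t ≤ min (qf d s m (z + s⁻¹ • a)) (qf d s m z) / qf d s m z then 0 else |lf d s a z|)
  else ‖a‖

lemma dist_eq (d : ℕ) (h m H : ℝ) (hh : 0 < h)
    (xh yh z : EuclideanSpace ℝ (Fin d)) (t : ℝ) (hne : xh ≠ yh) (hH : ‖xh - yh‖ ≤ H) :
    ‖(xh + √h • z) - couplingY d h m H xh yh z t‖ = Nf d (√h) m (xh - yh) z t := by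
  have hs : 0 < √h := Real.sqrt_pos.2 hh
  have hK : 0 < (2 * π * h) ^ (-(d : ℝ) / 2) := by positivity
  have ha : xh - yh ≠ 0 := sub_ne_zero.2 hne
  have hr : ‖xh - yh‖ ≠ 0 := norm_ne_zero_iff.2 ha
  unfold couplingY Nf
  rw [trunc_eq d h m hh yh (xh + √h • z) (z + (√h)⁻¹ • (xh - yh))
      (by rw [smul_add, smul_smul, mul_inv_cancel₀ hs.ne', one_smul]; abel),
    trunc_eq d h m hh xh (xh + √h • z) z (by abel), ← mul_min_of_nonneg _ _ hK.le,
    mul_div_mul_left _ _ hK.ne']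
  by_cases c1 : ‖√h • z‖ < m
  · rw [if_pos ⟨c1, hH⟩, if_pos c1]
    split_ifs
    · simp
    · rw [reflect, if_neg hne]
      have : xh + √h • z - (yh + √h • (z - (2 * inner ℝ (‖xh - yh‖⁻¹ • (xh - yh)) z) •
          (‖xh - yh‖⁻¹ • (xh - yh)))) =
          lf d (√h) (xh - yh) z • (‖xh - yh‖⁻¹ • (xh - yh)) := by
        unfold lf
        rw [add_smul, smul_smul ‖xh - yh‖, mul_inv_cancel₀ hr, one_smul]
        module
      rw [this, norm_smul, norm_smul, norm_inv, norm_norm, inv_mul_cancel₀ hr, mul_one,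
        Real.norm_eq_abs]
  · rw [if_neg (fun h => c1 h.1), if_neg c1]
    congr 1; abel

lemma Nf_meas (d : ℕ) (s m : ℝ) (a : EuclideanSpace ℝ (Fin d)) :
    Measurable (fun p : EuclideanSpace ℝ (Fin d) × ℝ => Nf d s m a p.1 p.2) := by
  have hq := qf_meas d s m
  have hq1 : Measurable fun p : EuclideanSpace ℝ (Fin d) × ℝ => qf d s m p.1 :=
    hq.comp measurable_fst
  have hq2 : Measurable fun p : EuclideanSpace ℝ (Fin d) × ℝ => qf d s m (p.1 + s⁻¹ • a) :=
    hq.comp (by fun_prop)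
  unfold Nf lf
  refine Measurable.ite (measurableSet_lt (by fun_prop) (by fun_prop)) ?_ (by fun_prop)
  refine Measurable.ite (measurableSet_le (by fun_prop) ((hq2.min hq1).div hq1))
    (by fun_prop) (by fun_prop)

lemma Nf_bound (d : ℕ) (s m : ℝ) (hs : 0 < s) (hm : 0 < m) (a z : EuclideanSpace ℝ (Fin d))
    (ha : a ≠ 0) (t : ℝ) : ‖Nf d s m a z t‖ ≤ ‖a‖ + 2 * m := by
  have := lf_abs d s hs a z ha
  have := norm_nonneg a
  unfold Nf
  split_ifs
  · simp; positivity
  · rw [Real.norm_eq_abs, abs_abs]; linarith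
  · rw [norm_norm]; linarith

lemma Nf_int (d : ℕ) (s m : ℝ) (a z : EuclideanSpace ℝ (Fin d)) :
    ∫ t in Set.Icc (0:ℝ) 1, Nf d s m a z t =
      if ‖s • z‖ < m then
        |lf d s a z| * (1 - min (qf d s m (z + s⁻¹ • a)) (qf d s m z) / qf d s m z)
      else ‖a‖ := by
  unfold Nf
  by_cases c : ‖s • z‖ < m
  · simp only [if_pos c]
    have h1 := qf_nonneg d s m z
    have h2 := qf_nonneg d s m (z + s⁻¹ • a)
    exact unif_integral _ _ (div_nonneg (le_min h2 h1) h1)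
      (div_le_one_of_le₀ (min_le_right _ _) h1)
  · simp [if_neg c]

lemma key_pointwise (d : ℕ) (s m : ℝ) (hs : 0 < s) (a z : EuclideanSpace ℝ (Fin d))
    (ha : a ≠ 0) (hz : ‖s • z‖ ≠ m) :
    rexp (-‖z‖ ^ 2 / 2) * (if ‖s • z‖ < m then
        |lf d s a z| * (1 - min (qf d s m (z + s⁻¹ • a)) (qf d s m z) / qf d s m z)
      else ‖a‖) =
    max (lf d s a z) 0 * (qf d s m z - qf d s m (z + s⁻¹ • a)) +
      ‖a‖ * (rexp (-‖z‖ ^ 2 / 2) - qf d s m z) := by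
  have hr : 0 < ‖a‖ := norm_pos_iff.2 ha
  have hl := lf_mul d s hs a z ha
  -- monotonicity of `qf` in the norm
  have mono : ∀ u v : EuclideanSpace ℝ (Fin d), ‖u‖ ^ 2 ≤ ‖v‖ ^ 2 → qf d s m v ≤ qf d s m u := by
    intro u v huv
    have huv' : ‖u‖ ≤ ‖v‖ := le_of_sq_le_sq huv (norm_nonneg _)
    have : ‖s • u‖ ≤ ‖s • v‖ := by
      rw [norm_smul, norm_smul]; gcongr
    by_cases c : ‖s • v‖ ≤ m
    · unfold qf
      rw [if_pos c, if_pos (this.trans c)]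
      gcongr
    · have : qf d s m v = 0 := by unfold qf; rw [if_neg c]
      rw [this]; exact qf_nonneg _ _ _ _
  have hs2 : 0 < s ^ 2 := by positivity
  by_cases c : ‖s • z‖ < m
  · have hq : qf d s m z = rexp (-‖z‖ ^ 2 / 2) := by unfold qf; rw [if_pos c.le]
    have hE := Real.exp_pos (-‖z‖ ^ 2 / 2)
    rw [if_pos c, hq]
    rcases le_total (lf d s a z) 0 with h | h
    · have := mono (z + s⁻¹ • a) z (by nlinarith)
      rw [hq] at this
      rw [max_eq_right h, min_eq_right this, div_self hE.ne']
      ring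
    · have := mono z (z + s⁻¹ • a) (by nlinarith)
      rw [hq] at this
      rw [max_eq_left h, min_eq_left this, abs_of_nonneg h]
      field_simp
      ring
  · have hq : qf d s m z = 0 := by
      unfold qf; rw [if_neg]; intro h; exact c (lt_of_le_of_ne h hz)
    rw [if_neg c, hq]
    rcases le_total (lf d s a z) 0 with h | h
    · rw [max_eq_right h]; ring
    · have := mono z (z + s⁻¹ • a) (by nlinarith)
      rw [hq] at this
      rw [le_antisymm this (qf_nonneg _ _ _ _)]
      ring

lemma gauss_int (d : ℕ) : Integrable (fun z : EuclideanSpace ℝ (Fin d) => rexp (-‖z‖ ^ 2 / 2)) := by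
  have h := integral_stdGauss d (fun _ => 1)
  have hp : IsProbabilityMeasure (_root_.stdGaussian d) := by
    unfold _root_.stdGaussian
    exact Measure.isProbabilityMeasure_map (by fun_prop)
  simp only [integral_const, mul_one, smul_eq_mul, probReal_univ] at h
  by_contra hc
  rw [integral_undef hc] at h
  simp at h

lemma gauss_final (d : ℕ) (s m : ℝ) (hs : 0 < s) (hm : 0 < m) (a : EuclideanSpace ℝ (Fin d))
    (ha : a ≠ 0) :
    ∫ z, (if ‖s • z‖ < m then
        |lf d s a z| * (1 - min (qf d s m (z + s⁻¹ • a)) (qf d s m z) / qf d s m z)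
      else ‖a‖) ∂(_root_.stdGaussian d) = ‖a‖ := by
  have hp : IsProbabilityMeasure (_root_.stdGaussian d) := by
    unfold _root_.stdGaussian
    exact Measure.isProbabilityMeasure_map (by fun_prop)
  have hae : ∀ᵐ z : EuclideanSpace ℝ (Fin d), ‖s • z‖ ≠ m := by
    have := Measure.addHaar_sphere_of_ne_zero (volume : Measure (EuclideanSpace ℝ (Fin d))) 0
      (div_pos hm hs).ne'
    rw [ae_iff]
    refine measure_mono_null (fun z hz => ?_) this
    simp only [ne_eq, not_not, Set.mem_ofPred_eq, norm_smul, Real.norm_of_nonneg hs.le] at hz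
    rw [mem_sphere_zero_iff_norm, eq_div_iff hs.ne', mul_comm, hz]
  have hqi : Integrable (qf d s m) := by
    simpa using qf_int d s m hs (fun _ => 1) continuous_const
  obtain ⟨hi, hs1⟩ := sym_integral (qf d s m) (lf d s a) (s⁻¹ • a) ‖a‖
    (by unfold lf; fun_prop) (fun z => by simp [qf]) (fun z => lf_neg d s hs a z ha)
    (fun z => lf_shift d s hs a z ha) (fun g hg => qf_int d s m hs g hg)
  have h1 := integral_stdGauss d (fun _ => 1)
  simp only [integral_const, mul_one, smul_eq_mul, probReal_univ] at h1
  have hi2 : Integrable (fun z => ‖a‖ * (rexp (-‖z‖ ^ 2 / 2) - qf d s m z)) :=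
    ((gauss_int d).sub hqi).const_mul _
  rw [integral_stdGauss, integral_congr_ae (hae.mono fun z hz => key_pointwise d s m hs a z ha hz),
    integral_add hi hi2, hs1, integral_const_mul,
    integral_sub (gauss_int d) hqi]
  linear_combination (-‖a‖) * h1

end aux2

/-- **Lemma (the coupling preserves the first moment of the distance).**
For `(X', Y')` given by the coupling construction from the points `x̂, ŷ`:
`𝔼‖X' - Y'‖ = ‖x̂ - ŷ‖`. -/
theorem couplingY_first_moment
    {d : ℕ} (hd : 1 ≤ d) (h m H : ℝ) (hh : 0 < h) (hm : 0 < m) (hH : 0 < H)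
    (xh yh : EuclideanSpace ℝ (Fin d))
    {Ω : Type*} [MeasureSpace Ω] [IsProbabilityMeasure (ℙ : Measure Ω)]
    (Z : Ω → EuclideanSpace ℝ (Fin d)) (ζ : Ω → ℝ)
    (hZmeas : Measurable Z) (hζmeas : Measurable ζ)
    (hZlaw : Measure.map Z ℙ = stdGaussian d)
    (hζlaw : Measure.map ζ ℙ = volume.restrict (Set.Icc (0:ℝ) 1))
    (hindep : IndepFun Z ζ ℙ) :
    ∫ ω, ‖(xh + Real.sqrt h • Z ω) - couplingY d h m H xh yh (Z ω) (ζ ω)‖ ∂ℙ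
      = ‖xh - yh‖ := by
  by_cases hne : xh = yh
  · subst hne
    simp [couplingY, reflect]
  by_cases hr : ‖xh - yh‖ ≤ H
  · have hs : 0 < √h := Real.sqrt_pos.2 hh
    have ha : xh - yh ≠ 0 := sub_ne_zero.2 hne
    simp only [dist_eq d h m H hh xh yh _ _ hne hr]
    have hN := Nf_meas d (√h) m (xh - yh)
    have hprod := (indepFun_iff_map_prod_eq_prod_map_map hZmeas.aemeasurable
      hζmeas.aemeasurable).1 hindep
    have : IsProbabilityMeasure (Measure.map Z ℙ) :=
      Measure.isProbabilityMeasure_map hZmeas.aemeasurable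
    have : IsProbabilityMeasure (Measure.map ζ ℙ) :=
      Measure.isProbabilityMeasure_map hζmeas.aemeasurable
    rw [← integral_map (φ := fun ω => (Z ω, ζ ω))
      (f := fun p : EuclideanSpace ℝ (Fin d) × ℝ => Nf d (√h) m (xh - yh) p.1 p.2)
      (hZmeas.prodMk hζmeas).aemeasurable hN.aestronglyMeasurable, hprod,
      integral_prod _ (Integrable.of_bound hN.aestronglyMeasurable (‖xh - yh‖ + 2 * m)
        (Filter.Eventually.of_forall fun p => Nf_bound d _ m hs hm _ _ ha _)), hζlaw, hZlaw]
    simp only [Nf_int]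
    exact gauss_final d _ m hs hm _ ha
  · have : ∀ ω, xh + √h • Z ω - couplingY d h m H xh yh (Z ω) (ζ ω) = xh - yh := by
      intro ω
      rw [couplingY, if_neg (fun h => hr h.2)]
      abel
    simp [this]
end

section
/- Let d ≥ 1 and let b : ℝ^d → ℝ^d satisfy Assumptions (A). Then for every h with 0 < h ≤ K/L² and all x, y ∈ ℝ^d with |x − y| > R, the deterministic Euler drift step contracts the distance: |x − y + h(b(x) − b(y))| ≤ (1 − hK/2)·|x − y|. -/
/-- **Lemma (one-step contraction of the deterministic Euler drift step at long range).**
If `b` is `L`-Lipschitz and `K`-contractive at distances `> R`, then for every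
`0 < h ≤ K/L²` and all `x, y` with `‖x - y‖ > R`:
`‖x - y + h (b x - b y)‖ ≤ (1 - hK/2) ‖x - y‖`. -/
theorem euler_drift_step_contraction
    {d : ℕ} (hd : 1 ≤ d) (b : EuclideanSpace ℝ (Fin d) → EuclideanSpace ℝ (Fin d))
    (L K R : ℝ) (hL : 0 < L) (hK : 0 < K) (hR : 0 < R)
    (hLip : ∀ x y : EuclideanSpace ℝ (Fin d), ‖b x - b y‖ ≤ L * ‖x - y‖)
    (hContr : ∀ x y : EuclideanSpace ℝ (Fin d), R < ‖x - y‖ →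
      @inner ℝ _ _ (x - y) (b x - b y) ≤ -K * ‖x - y‖ ^ 2)
    (h : ℝ) (hh : 0 < h) (hhK : h ≤ K / L ^ 2)
    (x y : EuclideanSpace ℝ (Fin d)) (hxy : R < ‖x - y‖) :
    ‖x - y + h • (b x - b y)‖ ≤ (1 - h * K / 2) * ‖x - y‖ := by
  have hr : 0 < ‖x - y‖ := hR.trans hxy
  have h1 := hLip x y
  have h2 := hContr x y hxy
  have h3 := neg_le_of_abs_le (abs_real_inner_le_norm (x - y) (b x - b y))
  have hL2 : h * L ^ 2 ≤ K := by rwa [le_div_iff₀ (by positivity)] at hhK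
  have h4 : ‖x - y‖ * ‖b x - b y‖ ≤ ‖x - y‖ * (L * ‖x - y‖) :=
    mul_le_mul_of_nonneg_left h1 hr.le
  have hKL : K ≤ L := by
    have : K * ‖x - y‖ ^ 2 ≤ L * ‖x - y‖ ^ 2 := by linarith
    exact le_of_mul_le_mul_right this (by positivity)
  have hhK1 : h * K ≤ 1 := by
    have e1 : h * L ≤ 1 := by
      have : (h * L) * L ≤ 1 * L := by linarith [hL2, hKL, sq L, mul_assoc h L L]
      exact le_of_mul_le_mul_right this hL
    exact (mul_le_mul_of_nonneg_left hKL hh.le).trans e1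
  have h5 : ‖b x - b y‖ ^ 2 ≤ (L * ‖x - y‖) ^ 2 :=
    pow_le_pow_left₀ (norm_nonneg _) h1 2
  refine abs_le_of_sq_le_sq' ?_ (mul_nonneg (by linarith) hr.le) |>.2
  rw [norm_add_sq_real, norm_smul, inner_smul_right, mul_pow, Real.norm_eq_abs, sq_abs]
  have h6 : h ^ 2 * ‖b x - b y‖ ^ 2 ≤ h ^ 2 * (L * ‖x - y‖) ^ 2 :=
    mul_le_mul_of_nonneg_left h5 (by positivity)
  have h7 := mul_le_mul_of_nonneg_left h2 hh.le
  have h8 : (h * L ^ 2) * (h * ‖x - y‖ ^ 2) ≤ K * (h * ‖x - y‖ ^ 2) :=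
    mul_le_mul_of_nonneg_right hL2 (by positivity)
  have h9 : 0 ≤ (h * K * ‖x - y‖) ^ 2 := sq_nonneg _
  linarith
end

section
/- Let d ≥ 1 and let b : ℝ^d → ℝ^d satisfy Assumptions (A). Then for all x ∈ ℝ^d: ⟨b(x), x⟩ ≤ M₂ − M₁|x|², where M₁ := K/2 and M₂ := L·(max(R, 2|b(0)|/K))² + |b(0)|·max(R, 2|b(0)|/K). -/
/-- **Lemma (contractivity at infinity implies a Lyapunov drift condition).**
If `b` is `L`-Lipschitz and `K`-contractive at distances `> R`, then for all `x`:
`⟨b x, x⟩ ≤ M₂ - M₁ ‖x‖²` with `M₁ = K/2` and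
`M₂ = L (max(R, 2‖b 0‖/K))² + ‖b 0‖ max(R, 2‖b 0‖/K)`. -/
theorem contractivity_at_infinity_implies_lyapunov
    {d : ℕ} (hd : 1 ≤ d) (b : EuclideanSpace ℝ (Fin d) → EuclideanSpace ℝ (Fin d))
    (L K R : ℝ) (hL : 0 < L) (hK : 0 < K) (hR : 0 < R)
    (hLip : ∀ x y : EuclideanSpace ℝ (Fin d), ‖b x - b y‖ ≤ L * ‖x - y‖)
    (hContr : ∀ x y : EuclideanSpace ℝ (Fin d), R < ‖x - y‖ →
      @inner ℝ _ _ (x - y) (b x - b y) ≤ -K * ‖x - y‖ ^ 2)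
    (x : EuclideanSpace ℝ (Fin d)) :
    @inner ℝ _ _ (b x) x
      ≤ (L * (max R (2 * ‖b 0‖ / K)) ^ 2 + ‖b 0‖ * max R (2 * ‖b 0‖ / K))
        - (K / 2) * ‖x‖ ^ 2 := by
  have hm1 : R ≤ max R (2 * ‖b 0‖ / K) := le_max_left _ _
  have hm2 : 2 * ‖b 0‖ / K ≤ max R (2 * ‖b 0‖ / K) := le_max_right _ _
  generalize max R (2 * ‖b 0‖ / K) = m at hm1 hm2 ⊢
  have hm : 0 < m := lt_of_lt_of_le hR hm1
  have hβ : 0 ≤ ‖b 0‖ := norm_nonneg _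
  rw [div_le_iff₀ hK] at hm2
  rw [real_inner_comm]
  have h0 : inner ℝ x (b 0) ≤ ‖x‖ * ‖b 0‖ := real_inner_le_norm _ _
  by_cases hx0 : x = 0
  · subst hx0
    simp only [inner_zero_left, norm_zero]
    have : 0 ≤ L * m ^ 2 := by positivity
    have : 0 ≤ ‖b 0‖ * m := by positivity
    linarith
  have hr : 0 < ‖x‖ := norm_pos_iff.mpr hx0
  by_cases hxm : m < ‖x‖
  · have h1 := hContr x 0 (by rw [sub_zero]; linarith)
    rw [sub_zero, inner_sub_right] at h1
    have h2 : 0 ≤ L * m ^ 2 := by positivity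
    have h3 : 0 ≤ ‖b 0‖ * m := by positivity
    have h4 : 2 * ‖b 0‖ ≤ ‖x‖ * K := hm2.trans (by gcongr)
    have h5 := mul_le_mul_of_nonneg_left h4 hr.le
    nlinarith
  · push Not at hxm
    have hc : 0 < 2 * m / ‖x‖ := by positivity
    have hcr : 2 * m / ‖x‖ * ‖x‖ = 2 * m := by field_simp
    generalize 2 * m / ‖x‖ = c at hc hcr
    have hz : ‖c • x‖ = 2 * m := by rw [norm_smul, Real.norm_of_nonneg hc.le, hcr]
    have h1 := hContr (c • x) 0 (by rw [sub_zero, hz]; linarith)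
    rw [sub_zero, real_inner_smul_left, hz] at h1
    have h2 : inner ℝ x (b (c • x) - b 0) ≤ -(2 * K * m * ‖x‖) := by
      refine le_of_mul_le_mul_left (h1.trans (le_of_eq ?_)) hc
      linear_combination (2 * K * m) * hcr
    have h3 : ‖x - c • x‖ = 2 * m - ‖x‖ := by
      have : x - c • x = (1 - c) • x := by rw [sub_smul, one_smul]
      have hc1 : 1 ≤ c := by
        by_contra h
        push Not at h
        nlinarith
      rw [this, norm_smul, Real.norm_of_nonpos (by linarith)]
      linarith
    have h4 : inner ℝ x (b x - b (c • x)) ≤ ‖x‖ * (L * (2 * m - ‖x‖)) := by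
      refine (real_inner_le_norm _ _).trans ?_
      rw [← h3]
      exact mul_le_mul_of_nonneg_left (hLip _ _) hr.le
    rw [inner_sub_right] at h2 h4
    have h5 : 0 ≤ L * (m - ‖x‖) ^ 2 := by positivity
    have h6 : ‖x‖ * ‖b 0‖ ≤ m * ‖b 0‖ := by gcongr
    have h7 : 0 ≤ K * ‖x‖ * (m - ‖x‖) := mul_nonneg (by positivity) (by linarith)
    have h8 : 0 ≤ K * ‖x‖ * m := by positivity
    nlinarith
end

section
/- Let a > 0 and r₂ > 0, and let f : [0, ∞) → [0, ∞) be defined by f(r) := (1/a)(1 − e^{−ar}) for 0 ≤ r ≤ r₂ and f(r) := (1/a)(1 − e^{−ar₂}) + (1/(2r₂))e^{−ar₂}(r² − r₂²) for r > r₂. Set A := max(a·r₂²/(1 − e^{−ar₂}), 2r₂·e^{ar₂}). Then for every r ∈ [0, ∞): r² ≤ A·f(r) and r ≤ e^{ar₂}·f(r). -/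
open scoped Classical

/-- The concave–convex distance function `f` built from parameters `a, r₂`:
`f(r) = (1/a)(1 - e^{-ar})` for `r ≤ r₂` and
`f(r) = (1/a)(1 - e^{-ar₂}) + (1/(2r₂)) e^{-ar₂} (r² - r₂²)` for `r > r₂`. -/
noncomputable def fDist (a r2 r : ℝ) : ℝ :=
  if r ≤ r2 then (1 / a) * (1 - Real.exp (-a * r))
  else (1 / a) * (1 - Real.exp (-a * r2)) + (1 / (2 * r2)) * Real.exp (-a * r2) * (r ^ 2 - r2 ^ 2)

/-- **Lemma (comparison of `f` with the identity and square functions).**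
With `A = max(a r₂²/(1 - e^{-a r₂}), 2 r₂ e^{a r₂})`, for every `r ≥ 0`:
`r² ≤ A f(r)` and `r ≤ e^{a r₂} f(r)`. -/
theorem fDist_comparison (a r2 : ℝ) (ha : 0 < a) (hr2 : 0 < r2) (r : ℝ) (hr : 0 ≤ r) :
    r ^ 2 ≤ max (a * r2 ^ 2 / (1 - Real.exp (-a * r2))) (2 * r2 * Real.exp (a * r2))
            * fDist a r2 r
      ∧ r ≤ Real.exp (a * r2) * fDist a r2 r := by
  have hE : 0 < Real.exp (a * r2) := Real.exp_pos _
  have hEE : Real.exp (a * r2) * Real.exp (-a * r2) = 1 := by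
    rw [← Real.exp_add]; simp
  have key : ∀ s : ℝ, 0 ≤ s → s ≤ r2 →
      s ≤ Real.exp (a * r2) * ((1 / a) * (1 - Real.exp (-a * s))) := by
    intro s hs hs2
    have h1 : a * s + 1 ≤ Real.exp (a * s) := Real.add_one_le_exp _
    have h2 : Real.exp (a * s) * Real.exp (-a * s) = 1 := by
      rw [← Real.exp_add]; simp
    have h3 : Real.exp (a * s) ≤ Real.exp (a * r2) :=
      Real.exp_le_exp.mpr (mul_le_mul_of_nonneg_left hs2 ha.le)
    have h4 : Real.exp (-a * s) ≤ 1 := Real.exp_le_one_iff.mpr (by nlinarith)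
    have h5 : a * s ≤ Real.exp (a * r2) * (1 - Real.exp (-a * s)) := by
      nlinarith [mul_le_mul_of_nonneg_right h3 (sub_nonneg.mpr h4)]
    have h6 : Real.exp (a * r2) * ((1 / a) * (1 - Real.exp (-a * s)))
        = (Real.exp (a * r2) * (1 - Real.exp (-a * s))) / a := by ring
    rw [h6, le_div_iff₀ ha]
    linarith
  have main : r ≤ Real.exp (a * r2) * fDist a r2 r ∧
      r ^ 2 ≤ 2 * r2 * (Real.exp (a * r2) * fDist a r2 r) := by
    unfold fDist
    split_ifs with h
    · have hk := key r hr h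
      refine ⟨hk, ?_⟩
      nlinarith [mul_le_mul_of_nonneg_left hk hr2.le, mul_nonneg hr (sub_nonneg.mpr h),
        mul_nonneg hr hr2.le]
    · have hk := key r2 hr2.le le_rfl
      have e : Real.exp (a * r2) * ((1 / a) * (1 - Real.exp (-a * r2))
          + (1 / (2 * r2)) * Real.exp (-a * r2) * (r ^ 2 - r2 ^ 2))
          = Real.exp (a * r2) * ((1 / a) * (1 - Real.exp (-a * r2)))
            + (r ^ 2 - r2 ^ 2) / (2 * r2) := by
        linear_combination ((r ^ 2 - r2 ^ 2) / (2 * r2)) * hEE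
      rw [e]
      generalize Real.exp (a * r2) * ((1 / a) * (1 - Real.exp (-a * r2))) = X at hk
      have hm : (r ^ 2 - r2 ^ 2) / (2 * r2) * (2 * r2) = r ^ 2 - r2 ^ 2 := by
        field_simp
      generalize (r ^ 2 - r2 ^ 2) / (2 * r2) = Y at hm
      have h2 : r ^ 2 + r2 ^ 2 ≤ 2 * r2 * (X + Y) := by nlinarith
      refine ⟨?_, by nlinarith⟩
      have : 2 * r2 * r ≤ 2 * r2 * (X + Y) := by nlinarith [sq_nonneg (r - r2)]
      exact le_of_mul_le_mul_left this (by positivity)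
  refine ⟨?_, main.1⟩
  have hf : 0 ≤ fDist a r2 r := nonneg_of_mul_nonneg_right (hr.trans main.1) hE
  calc r ^ 2 ≤ 2 * r2 * Real.exp (a * r2) * fDist a r2 r := by
        rw [mul_assoc]; exact main.2
    _ ≤ _ := mul_le_mul_of_nonneg_right (le_max_right _ _) hf
end
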